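/- There is a constant C (depending only on f) such that for all sufficiently large X, the sum ∑_{X < n < 2X} L₁(n, X), taken over integers n, satisfies |∑_{X < n < 2X} L₁(n, X) − X·log X| ≤ C·X. -/

import Mathlib

open Polynomial NumberField

open Classical in
/-- `L₁(n, X) = ∑_{P prime ideal of O_K, N(P) ≤ 3X} v_P((n − r))·log N(P)`, where
`v_P` is the exponent of `P` in the prime ideal factorization of the ideal `(n − r)`. -/
noncomputable def L1 {K : Type*} [Field K] [NumberField K] (rO : 𝓞 K) (n : ℤ) (Xr : ℝ) : ℝ :=
  ∑ᶠ P : Ideal (𝓞 K),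
    if P.IsPrime ∧ (Nat.card ((𝓞 K) ⧸ P) : ℝ) ≤ 3 * Xr then
      (Multiset.count P
          (UniqueFactorizationMonoid.normalizedFactors
            (Ideal.span {(n : 𝓞 K) - rO})) : ℝ) * Real.log (Nat.card ((𝓞 K) ⧸ P))
    else 0


lemma aux_psi : ∃ C : ℝ, 0 ≤ C ∧ ∀ n : ℕ,
    ∑ i ∈ Finset.Icc 1 n, ArithmeticFunction.vonMangoldt i ≤ C * n := by
  refine ⟨Real.log 4 + 4, by positivity, fun n => ?_⟩
  have := Chebyshev.psi_le_const_mul_self (x := (n:ℝ)) (by positivity)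
  unfold Chebyshev.psi at this
  rw [Nat.floor_natCast] at this
  exact this

lemma aux_abel (a w : ℕ → ℝ) (C : ℝ) 
    (hw0 : ∀ n, 0 ≤ w n) (hw : ∀ n, 1 ≤ n → w (n+1) ≤ w n)
    (h : ∀ n : ℕ, ∑ i ∈ Finset.Icc 1 n, a i ≤ C * n) (n : ℕ) :
    ∑ i ∈ Finset.Icc 1 n, a i * w i ≤ C * ∑ i ∈ Finset.Icc 1 n, w i := by
  -- stronger: sum a w - C sum w ≤ (sum a - C n) * w n
  have key : ∀ n : ℕ, 1 ≤ n → ∑ i ∈ Finset.Icc 1 n, a i * w i - C * ∑ i ∈ Finset.Icc 1 n, w i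
      ≤ (∑ i ∈ Finset.Icc 1 n, a i - C * n) * w n := by
    intro n hn
    induction n, hn using Nat.le_induction with
    | base => simp; linarith
    | succ n hn ih =>
      rw [Finset.sum_Icc_succ_top (by omega), Finset.sum_Icc_succ_top (by omega),
        Finset.sum_Icc_succ_top (by omega)]
      push_cast
      have h1 := h n
      have h2 := hw n hn
      nlinarith
  rcases Nat.eq_zero_or_pos n with rfl | hn
  · simp
  · have h1 := key n hn
    have h2 := h n
    have h3 := hw0 n
    nlinarith

lemma aux_pow (d : ℕ) (hd : 0 < d) (n : ℕ) :
    ∑ i ∈ Finset.Icc 1 n, (i:ℝ) ^ ((1:ℝ)/d - 1) ≤ d * (n:ℝ) ^ ((1:ℝ)/d) := by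
  induction n with
  | zero => simp; positivity
  | succ n ih =>
    rw [Finset.sum_Icc_succ_top (by omega)]
    have hd1 : (1:ℝ) ≤ d := by exact_mod_cast hd
    have hd' : (0:ℝ) < d := by positivity
    -- n^(1/d) ≤ (n+1)^(1/d) * (1 - 1/(d (n+1)))
    have hn : (0:ℝ) < (n:ℝ) + 1 := by positivity
    have hb := rpow_one_add_le_one_add_mul_self (s := -1/((n:ℝ)+1)) (p := (1:ℝ)/d) (by
      rw [le_div_iff₀ hn]; linarith [(Nat.cast_nonneg n : (0:ℝ) ≤ n)]) (by positivity) (by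
      rw [div_le_one hd']; exact hd1)
    have e1 : (n:ℝ) = ((n:ℝ)+1) * (1 + -1/((n:ℝ)+1)) := by field_simp; ring
    have e0 : 0 ≤ (1 + -1/((n:ℝ)+1)) := by
      have : (1 + -1/((n:ℝ)+1)) = n / (n+1) := by field_simp; ring
      rw [this]; positivity
    have e2 : (n:ℝ)^((1:ℝ)/d) ≤ ((n:ℝ)+1)^((1:ℝ)/d) * (1 + 1/d * (-1/((n:ℝ)+1))) := by
      conv_lhs => rw [e1]
      rw [Real.mul_rpow hn.le e0]
      gcongr
    have e3 : ((n:ℝ)+1)^((1:ℝ)/d - 1) = ((n:ℝ)+1)^((1:ℝ)/d) / (n+1) := by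
      rw [Real.rpow_sub hn, Real.rpow_one]
    push_cast
    rw [e3]
    calc _ ≤ (d:ℝ) * (((n:ℝ)+1)^((1:ℝ)/d) * (1 + 1/d * (-1/((n:ℝ)+1)))) + ((n:ℝ)+1)^((1:ℝ)/d) / (n+1) := by
            gcongr; exact ih.trans (by gcongr)
      _ = _ := by field_simp; ring

lemma aux_lam_pow (d : ℕ) (hd : 0 < d) : ∃ C : ℝ, 0 ≤ C ∧ ∀ n : ℕ,
    ∑ i ∈ Finset.Icc 1 n, ArithmeticFunction.vonMangoldt i * (i:ℝ) ^ ((1:ℝ)/d - 1)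
      ≤ C * (n:ℝ) ^ ((1:ℝ)/d) := by
  obtain ⟨C, hC, h⟩ := aux_psi
  refine ⟨C * d, by positivity, fun n => ?_⟩
  have hd1 : (1:ℝ) ≤ d := by exact_mod_cast hd
  refine (aux_abel _ (fun i => (i:ℝ) ^ ((1:ℝ)/d - 1)) C (fun n => by positivity) ?_ h n).trans ?_
  · intro n hn
    apply Real.rpow_le_rpow_of_nonpos (by positivity) (by push_cast; linarith)
    rw [sub_nonpos, div_le_one (by linarith)]; exact hd1
  · rw [mul_assoc]; gcongr; exact aux_pow d hd n

lemma aux_nonprime : ∃ C : ℝ, 0 ≤ C ∧ ∀ n : ℕ,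
    ∑ i ∈ Finset.Icc 1 n, ArithmeticFunction.vonMangoldt i * (if i.Prime then 0 else (1:ℝ)/i)
      ≤ C := by
  have h := ArithmeticFunction.vonMangoldt.summable_residueClass_non_primes_div (q := 1) (a := 1)
  have h0 : ∀ i : ℕ, 0 ≤ (if i.Prime then 0 else ArithmeticFunction.vonMangoldt.residueClass (1 : ZMod 1) i) / (i:ℝ) := by
    intro i
    have := ArithmeticFunction.vonMangoldt.residueClass_nonneg (1 : ZMod 1) i
    split_ifs <;> positivity
  refine ⟨_, tsum_nonneg (L := .unconditional ℕ) h0, fun n => ?_⟩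
  refine le_trans (le_of_eq ?_) (h.sum_le_tsum (Finset.Icc 1 n) (fun i _ => h0 i))
  refine Finset.sum_congr rfl fun i _ => ?_
  have : ArithmeticFunction.vonMangoldt.residueClass (1 : ZMod 1) i = ArithmeticFunction.vonMangoldt i := by
    unfold ArithmeticFunction.vonMangoldt.residueClass
    rw [Set.indicator_of_mem]
    exact Subsingleton.elim _ _
  rw [this]
  split_ifs <;> simp [div_eq_mul_inv]

lemma aux_pi : ∃ C : ℝ, 0 ≤ C ∧ ∀ x : ℝ, 2 ≤ x → (Nat.primeCounting ⌊x⌋₊ : ℝ) * Real.log x ≤ C * x := by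
  refine ⟨2 * Real.log 4 + 2, by positivity, fun x hx => ?_⟩
  have h := Chebyshev.pi_le_log4_mul_div (x := x) (by linarith)
  have hl : 0 < Real.log x := Real.log_pos (by linarith)
  rw [Real.log_sqrt (by linarith)] at h
  have h2 : Real.log x ≤ 2 * √x := by
    have := Real.log_le_sub_one_of_pos (x := √x) (by positivity)
    rw [Real.log_sqrt (by linarith)] at this
    linarith
  have h3 : √x * √x = x := Real.mul_self_sqrt (by linarith)
  calc _ ≤ (Real.log 4 * x / (Real.log x / 2) + √x) * Real.log x := by gcongr
    _ = 2 * Real.log 4 * x + √x * Real.log x := by field_simp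
    _ ≤ 2 * Real.log 4 * x + √x * (2 * √x) := by gcongr
    _ = _ := by linear_combination 2 * h3


section
variable (K : Type*) [Field K] [NumberField K]

noncomputable def PS (x : ℕ) : Finset (Ideal (𝓞 K)) :=
  ((Ideal.finite_setOfPred_absNorm_le (S := 𝓞 K) x).subset
    (show {I : Ideal (𝓞 K) | I.IsPrime ∧ I ≠ ⊥ ∧ Ideal.absNorm I ≤ x} ⊆ _ from
      fun _ h => h.2.2)).toFinset

variable {K}
lemma mem_PS {x : ℕ} {P : Ideal (𝓞 K)} :
    P ∈ PS K x ↔ P.IsPrime ∧ P ≠ ⊥ ∧ Ideal.absNorm P ≤ x := by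
  simp [PS]

lemma PS_mono {x y : ℕ} (h : x ≤ y) : PS K x ⊆ PS K y := by
  intro P hP
  rw [mem_PS] at *
  exact ⟨hP.1, hP.2.1, hP.2.2.trans h⟩

lemma two_le_absNorm {P : Ideal (𝓞 K)} (hP : P.IsPrime) (h0 : P ≠ ⊥) : 2 ≤ Ideal.absNorm P := by
  have h1 : Ideal.absNorm P ≠ 0 := by rwa [Ne, Ideal.absNorm_eq_zero_iff]
  have h2 : Ideal.absNorm P ≠ 1 := by
    rw [Ne, Ideal.absNorm_eq_one_iff]; exact hP.ne_top
  omega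

variable (K) in
open Classical in
noncomputable def QS (x : ℕ) : Finset (Ideal (𝓞 K) × ℕ) :=
  (PS K x ×ˢ Finset.Icc 1 x).filter (fun q => Ideal.absNorm q.1 ^ q.2 ≤ x)

lemma mem_QS {x : ℕ} {q : Ideal (𝓞 K) × ℕ} :
    q ∈ QS K x ↔ q.1.IsPrime ∧ q.1 ≠ ⊥ ∧ 1 ≤ q.2 ∧ Ideal.absNorm q.1 ^ q.2 ≤ x := by
  simp only [QS, Finset.mem_filter, Finset.mem_product, mem_PS, Finset.mem_Icc]
  constructor
  · rintro ⟨⟨⟨a, b, c⟩, d, e⟩, f⟩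
    exact ⟨a, b, d, f⟩
  · rintro ⟨a, b, c, d⟩
    have h2 := two_le_absNorm a b
    refine ⟨⟨⟨a, b, le_trans ?_ d⟩, c, le_trans ?_ d⟩, d⟩
    · exact Nat.le_self_pow (by omega) _
    · exact (Nat.lt_pow_self (by omega)).le

lemma card_primes_over (p : ℕ) (hp : p.Prime) (s : Finset (Ideal (𝓞 K)))
    (hs : ∀ P ∈ s, P.IsPrime ∧ P ≠ ⊥ ∧ (p : 𝓞 K) ∈ P) : s.card ≤ Module.finrank ℤ (𝓞 K) := by
  have h1 : ∏ P ∈ s, P ∣ Ideal.span {(p : 𝓞 K)} := by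
    apply Finset.prod_primes_dvd
    · intro P hP
      exact Ideal.prime_of_isPrime (hs P hP).2.1 (hs P hP).1
    · intro P hP
      rw [Ideal.dvd_span_singleton]
      exact (hs P hP).2.2
  have h2 := map_dvd Ideal.absNorm h1
  rw [map_prod, Ideal.absNorm_span_natCast] at h2
  have h3 : p ^ s.card ∣ ∏ P ∈ s, Ideal.absNorm P := by
    rw [← Finset.prod_const]
    apply Finset.prod_dvd_prod_of_dvd
    intro P hP
    obtain ⟨a, b, c⟩ := hs P hP
    have h4 : Ideal.absNorm P ∣ p ^ Module.finrank ℤ (𝓞 K) := by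
      rw [← Ideal.absNorm_span_natCast (S := 𝓞 K)]
      exact Ideal.absNorm_dvd_absNorm_of_le (by rwa [Ideal.span_singleton_le_iff_mem])
    obtain ⟨k, _, hk⟩ := (Nat.dvd_prime_pow hp).1 h4
    rw [hk]
    apply dvd_pow_self
    rintro rfl
    have := two_le_absNorm a b
    rw [hk] at this; simp at this
  exact (Nat.pow_dvd_pow_iff_le_right hp.one_lt).1 (h3.trans h2)

lemma exists_p {P : Ideal (𝓞 K)} (hP : P.IsPrime) (h0 : P ≠ ⊥) :
    ∃ p n : ℕ, p.Prime ∧ (p : 𝓞 K) ∈ P ∧ Ideal.absNorm P = p ^ n ∧ 1 ≤ n ∧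
      n ≤ Module.finrank ℤ (𝓞 K) := by
  have : P.IsMaximal := hP.isMaximal h0
  obtain ⟨p, n, hn, hm, hp, h⟩ := Ideal.exists_prime_and_absNorm_eq_pow P
  refine ⟨p, n, hp, hm, h, by omega, ?_⟩
  have h4 : Ideal.absNorm P ∣ p ^ Module.finrank ℤ (𝓞 K) := by
    rw [← Ideal.absNorm_span_natCast (S := 𝓞 K)]
    exact Ideal.absNorm_dvd_absNorm_of_le (by rwa [Ideal.span_singleton_le_iff_mem])
  rw [h] at h4
  exact (Nat.pow_dvd_pow_iff_le_right hp.one_lt).1 h4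

lemma p_mem_of {P : Ideal (𝓞 K)} (hP : P.IsPrime) {p k : ℕ} (h : Ideal.absNorm P = p ^ k) :
    (p : 𝓞 K) ∈ P := by
  have := Ideal.absNorm_mem P
  rw [h] at this
  push_cast at this
  exact hP.mem_of_pow_mem _ this

lemma logsum (g : ℕ → ℝ) (hg : ∀ n, 0 ≤ g n) (x : ℕ) :
    ∑ q ∈ QS K x, Real.log (Ideal.absNorm q.1) * g (Ideal.absNorm q.1 ^ q.2) ≤
    (Module.finrank ℤ (𝓞 K) : ℝ)^2 * ∑ n ∈ Finset.Icc 1 x, ArithmeticFunction.vonMangoldt n * g n := by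
  classical
  rw [← Finset.sum_fiberwise_of_maps_to (s := QS K x) (t := Finset.Icc 1 x)
    (g := fun q => Ideal.absNorm q.1 ^ q.2), Finset.mul_sum]
  swap
  · intro q hq
    rw [mem_QS] at hq
    have := two_le_absNorm hq.1 hq.2.1
    rw [Finset.mem_Icc]
    exact ⟨Nat.one_le_pow _ _ (by omega), hq.2.2.2⟩
  apply Finset.sum_le_sum
  intro n hn
  set F := (QS K x).filter (fun q => Ideal.absNorm q.1 ^ q.2 = n) with hF
  rcases F.eq_empty_or_nonempty with he | ⟨q₀, hq₀⟩
  · rw [he, Finset.sum_empty]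
    have := hg n
    have := ArithmeticFunction.vonMangoldt_nonneg (n := n)
    positivity
  rw [hF, Finset.mem_filter, mem_QS] at hq₀
  obtain ⟨⟨hP, h0, hk, hx⟩, hn'⟩ := hq₀
  obtain ⟨p, m, hp, hpm, hm, hm1, hm2⟩ := exists_p hP h0
  have hnp : n = p ^ (m * q₀.2) := by rw [← hn', hm, pow_mul]
  have hL : ArithmeticFunction.vonMangoldt n = Real.log p := by
    rw [hnp, ArithmeticFunction.vonMangoldt_apply_pow (by positivity), 
      ArithmeticFunction.vonMangoldt_apply_prime hp]
  have hmem : ∀ q ∈ F, (p : 𝓞 K) ∈ q.1 ∧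
      Real.log (Ideal.absNorm q.1) ≤ (Module.finrank ℤ (𝓞 K) : ℝ) * Real.log p := by
    intro q hq
    rw [hF, Finset.mem_filter, mem_QS] at hq
    obtain ⟨⟨a, b, c, d⟩, e⟩ := hq
    obtain ⟨p', m', hp', hpm', hm', hm1', hm2'⟩ := exists_p a b
    have : p' = p := by
      have : p' ^ (m' * q.2) = p ^ (m * q₀.2) := by rw [pow_mul, ← hm', e, hnp]
      have h5 : p' ∣ p ^ (m * q₀.2) := by
        rw [← this]; apply dvd_pow_self; positivity
      exact (Nat.prime_dvd_prime_iff_eq hp' hp).1 (hp'.dvd_of_dvd_pow h5)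
    subst this
    refine ⟨hpm', ?_⟩
    rw [hm']
    push_cast
    rw [Real.log_pow]
    have : 0 ≤ Real.log p' := Real.log_natCast_nonneg _
    gcongr
  have hinj : Set.InjOn Prod.fst (F : Set (Ideal (𝓞 K) × ℕ)) := by
    intro q hq q' hq' h
    rw [hF, Finset.mem_coe, Finset.mem_filter, mem_QS] at hq hq'
    refine Prod.ext h ?_
    have h2 := two_le_absNorm hq.1.1 hq.1.2.1
    have := hq.2.trans hq'.2.symm
    rw [← h] at this
    exact Nat.pow_right_injective h2 this
  have hcard : F.card ≤ Module.finrank ℤ (𝓞 K) := by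
    rw [← Finset.card_image_of_injOn hinj]
    apply card_primes_over p hp
    intro P hP'
    rw [Finset.mem_image] at hP'
    obtain ⟨q, hq, rfl⟩ := hP'
    have h2 := hmem q hq
    rw [hF, Finset.mem_filter, mem_QS] at hq
    exact ⟨hq.1.1, hq.1.2.1, h2.1⟩
  have hlp : 0 ≤ Real.log p := Real.log_natCast_nonneg _
  calc ∑ q ∈ F, Real.log (Ideal.absNorm q.1) * g (Ideal.absNorm q.1 ^ q.2)
      ≤ ∑ q ∈ F, ((Module.finrank ℤ (𝓞 K) : ℝ) * Real.log p) * g n := by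
        apply Finset.sum_le_sum
        intro q hq
        have h2 := (hmem q hq).2
        rw [hF, Finset.mem_filter] at hq
        rw [hq.2]
        exact mul_le_mul_of_nonneg_right h2 (hg n)
    _ = F.card * (((Module.finrank ℤ (𝓞 K) : ℝ) * Real.log p) * g n) := by
        rw [Finset.sum_const, nsmul_eq_mul]
    _ ≤ (Module.finrank ℤ (𝓞 K) : ℝ) * (((Module.finrank ℤ (𝓞 K) : ℝ) * Real.log p) * g n) := by
        have := hg n
        gcongr
    _ = _ := by rw [hL]; ring

open Classical in
lemma pow_dvd_iff_count {P J : Ideal (𝓞 K)} (hP : P.IsPrime) (h0 : P ≠ ⊥) (hJ : J ≠ ⊥) (k : ℕ) :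
    P ^ k ∣ J ↔ k ≤ Multiset.count P (UniqueFactorizationMonoid.normalizedFactors J) := by
  have hi := (Ideal.prime_of_isPrime h0 hP).irreducible
  have := UniqueFactorizationMonoid.emultiplicity_eq_count_normalizedFactors hi
    (b := J) hJ
  rw [normalize_eq] at this
  rw [pow_dvd_iff_le_emultiplicity, this]
  exact Nat.cast_le

open Classical in
lemma count_eq_sum {P J : Ideal (𝓞 K)} (hP : P.IsPrime) (h0 : P ≠ ⊥) (hJ : J ≠ ⊥) (L : ℕ)
    (hL : ∀ k, P ^ k ∣ J → k ≤ L) :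
    Multiset.count P (UniqueFactorizationMonoid.normalizedFactors J) = 
      ((Finset.Icc 1 L).filter (fun k => P ^ k ∣ J)).card := by
  set c := Multiset.count P (UniqueFactorizationMonoid.normalizedFactors J) with hc
  have : (Finset.Icc 1 L).filter (fun k => P ^ k ∣ J) = Finset.Icc 1 c := by
    ext k
    rw [Finset.mem_filter, Finset.mem_Icc, Finset.mem_Icc, pow_dvd_iff_count hP h0 hJ k]
    have := hL c ((pow_dvd_iff_count hP h0 hJ c).2 le_rfl)
    omega
  rw [this]; simp

open Classical in
lemma log_absNorm {J : Ideal (𝓞 K)} (hJ : J ≠ ⊥) (x : ℕ) (hx : Ideal.absNorm J ≤ x) :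
    Real.log (Ideal.absNorm J) = ∑ q ∈ QS K x, if q.1 ^ q.2 ∣ J then Real.log (Ideal.absNorm q.1) else 0 := by
  have hJn : Ideal.absNorm J ≠ 0 := by rwa [Ne, Ideal.absNorm_eq_zero_iff]
  have hdv : ∀ (P : Ideal (𝓞 K)) (k : ℕ), P ^ k ∣ J → Ideal.absNorm P ^ k ≤ x := by
    intro P k h
    rw [← map_pow]
    exact (Nat.le_of_dvd (by omega) (map_dvd _ h)).trans hx
  have h1 : Real.log (Ideal.absNorm J) = ∑ P ∈ PS K x,
      (Multiset.count P (UniqueFactorizationMonoid.normalizedFactors J) : ℝ) * Real.log (Ideal.absNorm P) := by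
    have e := Ideal.prod_normalizedFactors_eq_self hJ
    have hsub : (UniqueFactorizationMonoid.normalizedFactors J).toFinset ⊆ PS K x := by
      intro P hP
      rw [Multiset.mem_toFinset] at hP
      have hp := UniqueFactorizationMonoid.prime_of_normalized_factor P hP
      have hd := UniqueFactorizationMonoid.dvd_of_mem_normalizedFactors hP
      rw [mem_PS]
      refine ⟨Ideal.isPrime_of_prime hp, hp.ne_zero, ?_⟩
      simpa using hdv P 1 (by simpa using hd)
    have h2 : J = ∏ P ∈ PS K x, P ^ Multiset.count P (UniqueFactorizationMonoid.normalizedFactors J) := by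
      conv_lhs => rw [← e]
      rw [Finset.prod_multiset_count_of_subset _ _ hsub]
    conv_lhs => rw [h2]
    rw [map_prod]
    push_cast
    rw [Real.log_prod]
    · refine Finset.sum_congr rfl fun P _ => ?_
      rw [map_pow]; push_cast; rw [Real.log_pow]
    · intro P hP
      rw [mem_PS] at hP
      have := two_le_absNorm hP.1 hP.2.1
      rw [map_pow]; push_cast
      have : (Ideal.absNorm P : ℝ) ≠ 0 := by norm_cast; omega
      positivity
  rw [h1, QS, Finset.sum_filter, Finset.sum_product]
  refine Finset.sum_congr rfl fun P hP => ?_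
  rw [mem_PS] at hP
  have h2 := two_le_absNorm hP.1 hP.2.1
  rw [count_eq_sum hP.1 hP.2.1 hJ x, ← nsmul_eq_mul, ← Finset.sum_const, Finset.sum_filter]
  · refine Finset.sum_congr rfl fun k _ => ?_
    by_cases h : P ^ k ∣ J
    · simp [h, hdv P k h]
    · simp [h]
  · intro k hk
    exact (Nat.lt_pow_self (by omega)).le.trans (hdv P k hk)

end


section
variable (K : Type*) [Field K] [NumberField K]

open Classical in
noncomputable def obox (T : ℕ) : Finset (𝓞 K) :=
  (Fintype.piFinset fun _ : Module.Free.ChooseBasisIndex ℤ (𝓞 K) => Finset.Icc (-(T:ℤ)) T).map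
    (RingOfIntegers.basis K).equivFun.symm.toEquiv.toEmbedding

variable {K}
lemma mem_obox {T : ℕ} {x : 𝓞 K} : x ∈ obox K T ↔ ∀ i, |(RingOfIntegers.basis K).repr x i| ≤ T := by
  classical
  simp only [obox, Finset.mem_map_equiv, Fintype.mem_piFinset, Finset.mem_Icc, abs_le]
  rfl

lemma card_obox (T : ℕ) : (obox K T).card = (2 * T + 1) ^ Module.finrank ℤ (𝓞 K) := by
  classical
  rw [obox, Finset.card_map, Fintype.card_piFinset]
  simp only [Int.card_Icc, Finset.prod_const, Finset.card_univ]
  rw [Module.finrank_eq_card_chooseBasisIndex]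
  congr 1
  omega

lemma exists_nroot (d N : ℕ) (hd : 0 < d) : ∃ s : ℕ, s ^ d ≤ N ∧ N < (s + 1) ^ d := by
  refine ⟨Nat.findGreatest (fun s => s ^ d ≤ N) N, ?_, ?_⟩
  · exact Nat.findGreatest_spec (P := fun s => s ^ d ≤ N) (Nat.zero_le N) (by simp [hd.ne'])
  · by_contra! h
    have h1 : Nat.findGreatest (fun s => s ^ d ≤ N) N + 1 ≤ N :=
      le_trans (Nat.le_self_pow hd.ne' _) h
    exact Nat.findGreatest_is_greatest (P := fun s => s ^ d ≤ N) (Nat.lt_succ_self _) h1 h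

lemma finrank_pos' : 0 < Module.finrank ℤ (𝓞 K) := by
  rw [RingOfIntegers.rank]; exact Module.finrank_pos

lemma exists_small (I : Ideal (𝓞 K)) (hI : I ≠ ⊥) (s : ℕ)
    (hs : Ideal.absNorm I < (s + 1) ^ Module.finrank ℤ (𝓞 K)) :
    ∃ α ∈ I, α ≠ 0 ∧ α ∈ obox K s := by
  classical
  let S : Finset (Module.Free.ChooseBasisIndex ℤ (𝓞 K) → ℤ) :=
    Fintype.piFinset fun _ => Finset.Icc (0:ℤ) s
  have hS : S.card = (s+1) ^ Module.finrank ℤ (𝓞 K) := by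
    rw [Fintype.card_piFinset]
    simp only [Int.card_Icc, Finset.prod_const, Finset.card_univ]
    rw [Module.finrank_eq_card_chooseBasisIndex]
    congr 1
  have hfin : Finite (𝓞 K ⧸ I) := by
    rw [← Ideal.absNorm_ne_zero_iff, Ne, Ideal.absNorm_eq_zero_iff]; exact hI
  have := Fintype.ofFinite (𝓞 K ⧸ I)
  have hc : (Finset.univ : Finset (𝓞 K ⧸ I)).card < S.card := by
    rw [hS, Finset.card_univ, ← Nat.card_eq_fintype_card]
    exact hs
  obtain ⟨u, hu, v, hv, huv, he⟩ := Finset.exists_ne_map_eq_of_card_lt_of_maps_to hc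
    (f := fun a => Ideal.Quotient.mk I ((RingOfIntegers.basis K).equivFun.symm a)) (by simp [Set.MapsTo])
  refine ⟨(RingOfIntegers.basis K).equivFun.symm u - (RingOfIntegers.basis K).equivFun.symm v,
    Ideal.Quotient.eq.1 he, ?_, ?_⟩
  · rw [sub_ne_zero]
    exact fun h => huv ((RingOfIntegers.basis K).equivFun.symm.injective h)
  · rw [mem_obox]
    intro i
    rw [← map_sub, ← Module.Basis.equivFun_apply, LinearEquiv.apply_symm_apply]
    simp only [S, Fintype.mem_piFinset, Finset.mem_Icc] at hu hv
    have h1 := hu i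
    have h2 := hv i
    simp only [Pi.sub_apply]
    rw [abs_le]; constructor <;> linarith

variable (K) in
lemma covering : ∃ C : ℕ, ∀ I : Ideal (𝓞 K), I ≠ ⊥ → ∃ D : ℕ, 1 ≤ D ∧
    D ^ Module.finrank ℤ (𝓞 K) ≤ C ^ Module.finrank ℤ (𝓞 K) * Ideal.absNorm I ∧
    ∀ x : 𝓞 K, ∃ y ∈ obox K D, x - y ∈ I := by
  classical
  let b := RingOfIntegers.basis K
  let C : ℕ := ∑ i, ∑ j, ∑ k, (b.repr (b i * b j) k).natAbs + 1
  refine ⟨C, fun I hI => ?_⟩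
  obtain ⟨s, hs1, hs2⟩ := exists_nroot (Module.finrank ℤ (𝓞 K)) (Ideal.absNorm I) finrank_pos'
  obtain ⟨α, hαI, hα0, hα⟩ := exists_small I hI s hs2
  have hN : Ideal.absNorm I ≠ 0 := by rwa [Ne, Ideal.absNorm_eq_zero_iff]
  have hs0 : s ≠ 0 := by
    rintro rfl
    rw [zero_add, one_pow] at hs2; omega
  refine ⟨C * s, ?_, ?_, ?_⟩
  · have : 1 ≤ C := by simp only [C]; omega
    have : 0 < C * s := by positivity
    omega
  · rw [mul_pow]; gcongr
  intro x
  let q := (integralBasis K).repr (algebraMap (𝓞 K) K x / algebraMap (𝓞 K) K α)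
  let β : 𝓞 K := ∑ i, ⌊q i⌋ • b i
  refine ⟨x - α * β, ?_, ?_⟩
  swap
  · rw [sub_sub_cancel]; exact I.mul_mem_right _ hαI
  have hα0' : algebraMap (𝓞 K) K α ≠ 0 := by
    simpa using hα0
  have hx : algebraMap (𝓞 K) K x = ∑ i, q i • (algebraMap (𝓞 K) K α * algebraMap (𝓞 K) K (b i)) := by
    have h1 : algebraMap (𝓞 K) K x / algebraMap (𝓞 K) K α = ∑ i, q i • algebraMap (𝓞 K) K (b i) := by
      rw [← (integralBasis K).sum_repr (algebraMap (𝓞 K) K x / algebraMap (𝓞 K) K α)]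
      refine Finset.sum_congr rfl fun i _ => ?_
      rw [integralBasis_apply]
    calc algebraMap (𝓞 K) K x = algebraMap (𝓞 K) K α * (algebraMap (𝓞 K) K x / algebraMap (𝓞 K) K α) := by field_simp
      _ = _ := by
        rw [h1, Finset.mul_sum]
        refine Finset.sum_congr rfl fun i _ => ?_
        rw [mul_smul_comm]
  have hβ : algebraMap (𝓞 K) K (α * β) = ∑ i, (⌊q i⌋ : ℚ) • (algebraMap (𝓞 K) K α * algebraMap (𝓞 K) K (b i)) := by
    simp only [β, map_mul, map_sum, Finset.mul_sum, zsmul_eq_mul, map_intCast, Rat.smul_def]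
    refine Finset.sum_congr rfl fun i _ => ?_
    push_cast
    ring
  have hy : algebraMap (𝓞 K) K (x - α * β) = ∑ i, (Int.fract (q i)) • algebraMap (𝓞 K) K (α * b i) := by
    rw [map_sub, hβ, hx, ← Finset.sum_sub_distrib]
    refine Finset.sum_congr rfl fun i _ => ?_
    rw [← sub_smul, map_mul]; rfl
  rw [mem_obox]
  intro k
  have hk : ((b.repr (x - α * β) k : ℤ) : ℚ) = ∑ i, Int.fract (q i) * ((b.repr (α * b i) k : ℤ) : ℚ) := by
    have h1 := integralBasis_repr_apply K (x - α * β) k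
    rw [hy, map_sum] at h1
    simp only [map_smul, Finsupp.coe_finsetSum, Finset.sum_apply, Finsupp.smul_apply, integralBasis_repr_apply, smul_eq_mul] at h1
    simpa using h1.symm
  have hαb : ∀ i, |b.repr (α * b i) k| ≤ ∑ j, (s:ℤ) * |b.repr (b i * b j) k| := by
    intro i
    have : α * b i = ∑ j, b.repr α j • (b i * b j) := by
      conv_lhs => rw [← b.sum_repr α]
      rw [Finset.sum_mul]
      refine Finset.sum_congr rfl fun j _ => ?_
      rw [smul_mul_assoc, mul_comm]
    rw [this, map_sum, Finsupp.coe_finsetSum, Finset.sum_apply]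
    refine (Finset.abs_sum_le_sum_abs _ _).trans (Finset.sum_le_sum fun j _ => ?_)
    rw [map_smul, Finsupp.smul_apply, smul_eq_mul, abs_mul]
    gcongr
    exact mem_obox.1 hα j
  have h2 : |((b.repr (x - α * β) k : ℤ) : ℚ)| ≤ ((∑ i, ∑ j, (s:ℤ) * |b.repr (b i * b j) k| : ℤ) : ℚ) := by
    rw [hk]
    refine (Finset.abs_sum_le_sum_abs _ _).trans ?_
    rw [Int.cast_sum]
    refine Finset.sum_le_sum fun i _ => ?_
    rw [abs_mul]
    calc _ ≤ 1 * |((b.repr (α * b i) k : ℤ) : ℚ)| := by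
          gcongr
          rw [abs_of_nonneg (Int.fract_nonneg _)]
          exact (Int.fract_lt_one _).le
      _ ≤ _ := by
          rw [one_mul, ← Int.cast_abs]
          exact_mod_cast hαb i
  have h3 : |b.repr (x - α * β) k| ≤ ∑ i, ∑ j, (s:ℤ) * |b.repr (b i * b j) k| := by
    rw [← Int.cast_abs] at h2
    exact_mod_cast h2
  refine h3.trans ?_
  have h4 : ∀ i j, |b.repr (b i * b j) k| ≤ ∑ k, |b.repr (b i * b j) k| := by
    intro i j
    exact Finset.single_le_sum (f := fun k => |b.repr (b i * b j) k|) (fun _ _ => abs_nonneg _) (Finset.mem_univ k)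
  have h5 : ∑ i, ∑ j, (s:ℤ) * |b.repr (b i * b j) k| ≤ (s:ℤ) * ∑ i, ∑ j, ∑ k, |b.repr (b i * b j) k| := by
    simp only [Finset.mul_sum (a := (s:ℤ))]
    simp only [← Finset.mul_sum (a := (s:ℤ))]
    gcongr with i _ j _
    exact h4 i j
  refine h5.trans ?_
  simp only [C]
  push_cast
  have : (0:ℤ) ≤ s := by positivity
  linarith

lemma obox_add {S T : ℕ} {x y : 𝓞 K} (hx : x ∈ obox K S) (hy : y ∈ obox K T) : x + y ∈ obox K (S + T) := by
  rw [mem_obox] at *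
  intro i
  rw [map_add, Finsupp.add_apply]
  push_cast
  exact (abs_add_le _ _).trans (add_le_add (hx i) (hy i))

open Classical in
lemma class_card_le (I : Ideal (𝓞 K)) (D : ℕ)
    (hD : ∀ x : 𝓞 K, ∃ y ∈ obox K D, x - y ∈ I) (T : ℕ) (q q' : 𝓞 K ⧸ I) :
    ((obox K T).filter (fun y => Ideal.Quotient.mk I y = q)).card ≤
    ((obox K (T + D)).filter (fun y => Ideal.Quotient.mk I y = q')).card := by
  obtain ⟨u, hu⟩ := Ideal.Quotient.mk_surjective (q' - q)
  obtain ⟨z, hz, hz'⟩ := hD u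
  apply Finset.card_le_card_of_injOn (fun y => y + z)
  · intro y hy
    simp only [Finset.coe_filter, Set.mem_ofPred_eq] at hy ⊢
    refine ⟨obox_add hy.1 hz, ?_⟩
    rw [map_add, hy.2, ← Ideal.Quotient.eq.2 hz', hu]; ring
  · intro a _ b _ h
    exact add_right_cancel h

open Classical in
lemma class_card_sum (I : Ideal (𝓞 K)) [Fintype (𝓞 K ⧸ I)] (T : ℕ) :
    ∑ q : 𝓞 K ⧸ I, ((obox K T).filter (fun y => Ideal.Quotient.mk I y = q)).card =
      (2 * T + 1) ^ Module.finrank ℤ (𝓞 K) := by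
  rw [← card_obox]
  exact (Finset.card_eq_sum_card_fiberwise (by simp [Set.MapsTo])).symm

open Classical in
lemma class_bounds (I : Ideal (𝓞 K)) (hI : I ≠ ⊥) (D : ℕ)
    (hD : ∀ x : 𝓞 K, ∃ y ∈ obox K D, x - y ∈ I) (T : ℕ) (q : 𝓞 K ⧸ I) :
    Ideal.absNorm I * ((obox K T).filter (fun y => Ideal.Quotient.mk I y = q)).card ≤ 
      (2 * (T + D) + 1) ^ Module.finrank ℤ (𝓞 K) ∧
    (D ≤ T → (2 * (T - D) + 1) ^ Module.finrank ℤ (𝓞 K) ≤ 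
      Ideal.absNorm I * ((obox K T).filter (fun y => Ideal.Quotient.mk I y = q)).card) := by
  have hfin : Finite (𝓞 K ⧸ I) := by
    rw [← Ideal.absNorm_ne_zero_iff, Ne, Ideal.absNorm_eq_zero_iff]; exact hI
  have := Fintype.ofFinite (𝓞 K ⧸ I)
  have hN : Ideal.absNorm I = (Finset.univ : Finset (𝓞 K ⧸ I)).card := by
    rw [Finset.card_univ, ← Nat.card_eq_fintype_card]; rfl
  rw [hN, ← smul_eq_mul, ← Finset.sum_const]
  constructor
  · rw [← class_card_sum I]
    exact Finset.sum_le_sum fun q' _ => class_card_le I D hD T q q'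
  · intro h
    rw [← class_card_sum I]
    refine Finset.sum_le_sum fun q' _ => ?_
    have := class_card_le I D hD (T - D) q' q
    rwa [Nat.sub_add_cancel h] at this

end


section
variable {K : Type*} [Field K] [NumberField K]

lemma pow_sub_le (d : ℕ) {a b : ℝ} (ha : 0 ≤ a) (hab : a ≤ b) :
    b ^ (d+1) - a ^ (d+1) ≤ (d+1) * (b - a) * b ^ d := by
  induction d with
  | zero => simp
  | succ d ih =>
    have h1 : a ^ (d+1) ≤ b ^ (d+1) := by gcongr
    have hb : 0 ≤ b := ha.trans hab
    have h2 : a ^ (d+1) * (b - a) ≤ b ^ (d+1) * (b - a) := by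
      apply mul_le_mul_of_nonneg_right h1; linarith
    have h3 := mul_le_mul_of_nonneg_left ih hb
    push_cast
    calc b ^ (d+1+1) - a ^ (d+1+1) = b * (b^(d+1) - a^(d+1)) + a^(d+1) * (b - a) := by ring
      _ ≤ b * ((d+1) * (b - a) * b ^ d) + b ^ (d+1) * (b - a) := by linarith
      _ = _ := by ring

variable (K) in
open Classical in
lemma count_approx (B : ℕ) : ∃ C : ℝ, 0 ≤ C ∧ ∀ I : Ideal (𝓞 K), I ≠ ⊥ → ∀ T : ℕ, 1 ≤ T →
    Ideal.absNorm I ≤ B * T ^ Module.finrank ℤ (𝓞 K) → ∀ q : 𝓞 K ⧸ I,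
    |(((obox K T).filter (fun y => Ideal.Quotient.mk I y = q)).card : ℝ) - 
      (2 * (T:ℝ) + 1) ^ Module.finrank ℤ (𝓞 K) / Ideal.absNorm I| ≤
    C * ((T:ℝ) ^ (Module.finrank ℤ (𝓞 K) - 1) * 
      (Ideal.absNorm I : ℝ) ^ ((1:ℝ) / (Module.finrank ℤ (𝓞 K) : ℕ) - 1)) := by
  obtain ⟨C₀, hC₀⟩ := covering K
  obtain ⟨e, he⟩ : ∃ e, Module.finrank ℤ (𝓞 K) = e + 1 := 
    ⟨Module.finrank ℤ (𝓞 K) - 1, by have := finrank_pos' (K := K); omega⟩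
  have hd0 : (0:ℝ) < ((e + 1 : ℕ) : ℝ) := by positivity
  refine ⟨(e+1) * 3 * C₀ * (3 + 2 * C₀ * B) ^ e, by positivity, ?_⟩
  intro I hI T hT hN q
  obtain ⟨D, hD1, hD2, hD3⟩ := hC₀ I hI
  have hb := class_bounds I hI D hD3 T q
  set c := ((obox K T).filter (fun y => Ideal.Quotient.mk I y = q)).card with hc
  rw [he] at hD2 hN hb ⊢
  rw [Nat.add_sub_cancel]
  set N := Ideal.absNorm I with hNdef
  have hN0 : N ≠ 0 := by rw [hNdef, Ne, Ideal.absNorm_eq_zero_iff]; exact hI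
  have hNpos : (0:ℝ) < N := by exact_mod_cast Nat.pos_of_ne_zero hN0
  have hDN : (D:ℝ) ≤ C₀ * (N:ℝ) ^ ((1:ℝ)/((e+1:ℕ):ℝ)) := by
    have h1 : ((D:ℝ)^(e+1)) ≤ (C₀:ℝ)^(e+1) * N := by exact_mod_cast hD2
    have h2 : ((C₀:ℝ) * (N:ℝ) ^ ((1:ℝ)/((e+1:ℕ):ℝ)))^(e+1) = (C₀:ℝ)^(e+1) * N := by
      rw [mul_pow, ← Real.rpow_natCast ((N:ℝ) ^ _), ← Real.rpow_mul hNpos.le, one_div, 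
        inv_mul_cancel₀ hd0.ne', Real.rpow_one]
    rw [← h2] at h1
    exact le_of_pow_le_pow_left₀ (by omega) (by positivity) h1
  have hDT : (D:ℝ) ≤ C₀ * B * T := by
    have hB : 1 ≤ B := by
      rcases Nat.eq_zero_or_pos B with h | h
      · rw [h] at hN; omega
      · exact h
    have h1 : D ^ (e+1) ≤ (C₀ * B * T) ^ (e+1) := by
      refine hD2.trans ?_
      rw [mul_assoc, mul_pow]
      apply Nat.mul_le_mul_left
      refine hN.trans ?_
      rw [mul_pow]
      apply Nat.mul_le_mul_right
      exact Nat.le_self_pow (by omega) _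
    have := (Nat.pow_le_pow_iff_left (by omega)).1 h1
    exact_mod_cast this
  have hT' : (1:ℝ) ≤ T := by exact_mod_cast hT
  have hD1' : (1:ℝ) ≤ D := by exact_mod_cast hD1
  have hET : 2 * (T:ℝ) + 1 + 2 * D ≤ (3 + 2 * C₀ * B) * T := by nlinarith
  have hpw : (2 * (T:ℝ) + 1 + 2 * D)^e ≤ ((3 + 2 * C₀ * B) * T)^e := by gcongr
  set W : ℝ := (e+1) * (3 * D) * ((3 + 2 * C₀ * B) * T)^e with hW
  have hup : (N:ℝ) * c - (2 * (T:ℝ)+1)^(e+1) ≤ W := by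
    have h1 : (N:ℝ) * c ≤ (2 * ((T:ℝ) + D) + 1)^(e+1) := by exact_mod_cast hb.1
    have h2 := pow_sub_le e (a := 2 * (T:ℝ) + 1) (b := 2 * (T:ℝ) + 1 + 2 * D) (by positivity) (by linarith)
    have h3 : ((e:ℝ)+1) * (2 * (T:ℝ) + 1 + 2 * D - (2 * (T:ℝ) + 1)) * (2 * (T:ℝ) + 1 + 2 * D)^e ≤ W := by
      rw [hW]
      gcongr
      linarith
    have h4 : (2 * ((T:ℝ) + D) + 1) = 2 * (T:ℝ) + 1 + 2 * D := by ring
    rw [h4] at h1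
    linarith
  have hlo : (2 * (T:ℝ)+1)^(e+1) - (N:ℝ) * c ≤ W := by
    have hpw2 : (2 * (T:ℝ) + 1)^e ≤ ((3 + 2 * C₀ * B) * T)^e := by
      refine le_trans ?_ hpw
      apply pow_le_pow_left₀ (by positivity); linarith
    by_cases hDT' : D ≤ T
    · have h1 : (2 * ((T:ℝ) - D) + 1)^(e+1) ≤ (N:ℝ) * c := by
        have := hb.2 hDT'
        rw [← Nat.cast_sub hDT']
        exact_mod_cast this
      have hDT'' : (D:ℝ) ≤ T := by exact_mod_cast hDT'
      have h2 := pow_sub_le e (a := 2 * ((T:ℝ) - D) + 1) (b := 2 * (T:ℝ) + 1) (by linarith) (by linarith)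
      have h3 : ((e:ℝ)+1) * (2 * (T:ℝ) + 1 - (2 * ((T:ℝ) - D) + 1)) * (2 * (T:ℝ) + 1)^e ≤ W := by
        rw [hW]
        gcongr
        linarith
      linarith
    · push Not at hDT'
      have hDT'' : (T:ℝ) + 1 ≤ D := by exact_mod_cast hDT'
      have : (2 * (T:ℝ)+1)^(e+1) ≤ W := by
        rw [pow_succ', hW]
        gcongr
        have : (0:ℝ) ≤ e := by positivity
        nlinarith
      have : 0 ≤ (N:ℝ) * c := by positivity
      linarith
  have hfin : |(c:ℝ) - (2 * (T:ℝ)+1)^(e+1)/N| ≤ W / N := by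
    rw [le_div_iff₀ hNpos, ← abs_of_pos hNpos, ← abs_mul, abs_of_pos hNpos, sub_mul, div_mul_cancel₀ _ hNpos.ne', abs_le]
    constructor <;> linarith
  refine hfin.trans ?_
  rw [Real.rpow_sub hNpos, Real.rpow_one, hW, mul_pow]
  calc _ ≤ (e+1) * (3 * (C₀ * (N:ℝ) ^ ((1:ℝ)/((e+1:ℕ):ℝ)))) * ((3 + 2 * C₀ * B)^e * (T:ℝ)^e) / N := by
        gcongr
    _ = _ := by ring

lemma onorm_prod (α : 𝓞 K) : (Ideal.absNorm (Ideal.span {α}) : ℝ) = 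
    ∏ σ : K →ₐ[ℚ] ℂ, ‖σ (algebraMap (𝓞 K) K α)‖ := by
  rw [← norm_prod, ← Algebra.norm_eq_prod_embeddings, Ideal.absNorm_span_singleton]
  have h := Algebra.coe_norm_int α
  rw [show algebraMap (𝓞 K) K α = (α : K) from rfl, ← h, Nat.cast_natAbs]
  simp

lemma norm_bounds (α : 𝓞 K) (l u : ℝ) (hl : 0 ≤ l) 
    (h1 : ∀ σ : K →ₐ[ℚ] ℂ, l ≤ ‖σ (algebraMap (𝓞 K) K α)‖)
    (h2 : ∀ σ : K →ₐ[ℚ] ℂ, ‖σ (algebraMap (𝓞 K) K α)‖ ≤ u) : 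
    l ^ Module.finrank ℤ (𝓞 K) ≤ Ideal.absNorm (Ideal.span {α}) ∧ 
    (Ideal.absNorm (Ideal.span {α}) : ℝ) ≤ u ^ Module.finrank ℤ (𝓞 K) := by
  have hc : Module.finrank ℤ (𝓞 K) = (Finset.univ : Finset (K →ₐ[ℚ] ℂ)).card := by
    rw [RingOfIntegers.rank, Finset.card_univ, AlgHom.card]
  rw [onorm_prod, hc, ← Finset.prod_const, ← Finset.prod_const]
  constructor
  · exact Finset.prod_le_prod (fun _ _ => hl) fun σ _ => h1 σ
  · exact Finset.prod_le_prod (fun _ _ => norm_nonneg _) fun σ _ => h2 σ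

variable (K) in
lemma norm_shift : ∃ M B : ℕ, 1 ≤ B ∧ ∀ T : ℕ, 1 ≤ T → ∀ y ∈ obox K T,
    T ^ Module.finrank ℤ (𝓞 K) ≤ Ideal.absNorm (Ideal.span {((M * T : ℕ) : 𝓞 K) + y}) ∧
    Ideal.absNorm (Ideal.span {((M * T : ℕ) : 𝓞 K) + y}) ≤ B * T ^ Module.finrank ℤ (𝓞 K) := by
  classical
  let b := RingOfIntegers.basis K
  let b₀ : ℝ := ∑ σ : K →ₐ[ℚ] ℂ, ∑ i, ‖σ (algebraMap (𝓞 K) K (b i))‖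
  have hb₀ : 0 ≤ b₀ := by positivity
  have hy : ∀ T : ℕ, ∀ y ∈ obox K T, ∀ σ : K →ₐ[ℚ] ℂ, ‖σ (algebraMap (𝓞 K) K y)‖ ≤ b₀ * T := by
    intro T y hy σ
    rw [mem_obox] at hy
    have : y = ∑ i, b.repr y i • b i := (b.sum_repr y).symm
    rw [this]
    simp only [zsmul_eq_mul, map_sum, map_mul, map_intCast]
    calc _ ≤ ∑ i, ‖((b.repr y i : ℤ) : ℂ) * σ (algebraMap (𝓞 K) K (b i))‖ := norm_sum_le _ _
      _ ≤ ∑ i, ‖σ (algebraMap (𝓞 K) K (b i))‖ * T := by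
        refine Finset.sum_le_sum fun i _ => ?_
        rw [norm_mul, mul_comm]
        gcongr
        rw [Complex.norm_intCast]
        exact_mod_cast hy i
      _ ≤ _ := by
        rw [← Finset.sum_mul]
        gcongr
        exact Finset.single_le_sum (f := fun σ : K →ₐ[ℚ] ℂ => ∑ i, ‖σ (algebraMap (𝓞 K) K (b i))‖)
          (fun _ _ => by positivity) (Finset.mem_univ σ)
  let m : ℕ := ⌈b₀⌉₊
  have hm : b₀ ≤ m := Nat.le_ceil _
  refine ⟨m + 1, (2 * m + 1) ^ Module.finrank ℤ (𝓞 K), Nat.one_le_pow _ _ (by omega), ?_⟩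
  intro T hT y hyT
  have hT' : (1:ℝ) ≤ T := by exact_mod_cast hT
  have := norm_bounds ((((m+1) * T : ℕ) : 𝓞 K) + y) (T:ℝ) ((2 * m + 1) * T) (by positivity) ?_ ?_
  · rw [← mul_pow]
    exact_mod_cast this
  all_goals
    intro σ
    have h1 := hy T y hyT σ
    rw [map_add, map_add, map_natCast, map_natCast]
    have h3 : ‖(((m+1) * T : ℕ) : ℂ)‖ = (m + 1) * T := by
      rw [Complex.norm_natCast]; push_cast; rfl
  · have h2 := norm_sub_le_norm_add (((m+1) * T : ℕ) : ℂ) (σ (algebraMap (𝓞 K) K y))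
    rw [h3] at h2
    nlinarith
  · have h2 := norm_add_le (((m+1) * T : ℕ) : ℂ) (σ (algebraMap (𝓞 K) K y))
    rw [h3] at h2
    nlinarith
end


section
variable (K : Type*) [Field K] [NumberField K]

noncomputable def Mer (x : ℕ) : ℝ :=
  ∑ P ∈ PS K x, Real.log (Ideal.absNorm P) / Ideal.absNorm P

variable {K}
lemma Mer_nonneg (x : ℕ) : 0 ≤ Mer K x :=
  Finset.sum_nonneg fun P _ => div_nonneg (Real.log_natCast_nonneg _) (by positivity)

lemma Mer_mono {x y : ℕ} (h : x ≤ y) : Mer K x ≤ Mer K y :=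
  Finset.sum_le_sum_of_subset_of_nonneg (PS_mono h)
    fun P _ _ => div_nonneg (Real.log_natCast_nonneg _) (by positivity)

variable (K) in
lemma nonprime_sum : ∃ C : ℝ, 0 ≤ C ∧ ∀ x : ℕ, ∑ q ∈ QS K x, 
    Real.log (Ideal.absNorm q.1) * (if (Ideal.absNorm q.1 ^ q.2).Prime then 0 else 
      (1:ℝ)/(Ideal.absNorm q.1 ^ q.2 : ℕ)) ≤ C := by
  obtain ⟨C, hC, h⟩ := aux_nonprime
  refine ⟨(Module.finrank ℤ (𝓞 K) : ℝ)^2 * C, by positivity, fun x => ?_⟩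
  refine (logsum (K := K) (fun n => if n.Prime then 0 else (1:ℝ)/n) ?_ x).trans ?_
  · intro n; split_ifs <;> positivity
  · gcongr; exact h x

lemma QS_Mer (x : ℕ) : ∑ q ∈ QS K x, Real.log (Ideal.absNorm q.1) * ((1:ℝ)/(Ideal.absNorm q.1 ^ q.2 : ℕ)) =
    Mer K x + ∑ q ∈ (QS K x).filter (fun q => q.2 ≠ 1), 
      Real.log (Ideal.absNorm q.1) * ((1:ℝ)/(Ideal.absNorm q.1 ^ q.2 : ℕ)) := by
  rw [← Finset.sum_filter_add_sum_filter_not (QS K x) (fun q => q.2 = 1)]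
  congr 1
  symm
  unfold Mer
  refine Finset.sum_nbij' (fun P => (P, 1)) (fun q => q.1) ?_ ?_ ?_ ?_ ?_
  · intro P hP
    rw [mem_PS] at hP
    rw [Finset.mem_filter, mem_QS]
    simpa using hP
  · intro q hq
    rw [Finset.mem_filter, mem_QS] at hq
    rw [mem_PS]
    have := hq.1.2.2.2
    rw [hq.2, pow_one] at this
    exact ⟨hq.1.1, hq.1.2.1, this⟩
  · intro P _; rfl
  · intro q hq
    rw [Finset.mem_filter] at hq
    exact Prod.ext rfl hq.2.symm
  · intro P _
    simp [div_eq_mul_inv]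

lemma QS_Mer_bound : ∃ C : ℝ, 0 ≤ C ∧ ∀ x : ℕ, 
    |∑ q ∈ QS K x, Real.log (Ideal.absNorm q.1) * ((1:ℝ)/(Ideal.absNorm q.1 ^ q.2 : ℕ)) - Mer K x| ≤ C := by
  obtain ⟨C, hC, h⟩ := nonprime_sum K
  refine ⟨C, hC, fun x => ?_⟩
  have hl : ∀ q : Ideal (𝓞 K) × ℕ, 0 ≤ Real.log (Ideal.absNorm q.1) := fun q => Real.log_natCast_nonneg _
  rw [QS_Mer, add_sub_cancel_left, abs_of_nonneg]
  · refine le_trans ?_ (h x)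
    rw [Finset.sum_filter]
    apply Finset.sum_le_sum
    intro q hq
    have := hl q
    by_cases h1 : q.2 = 1
    · simp only [h1, ne_eq, not_true_eq_false, if_false]
      split_ifs <;> positivity
    · have hnp : ¬ (Ideal.absNorm q.1 ^ q.2).Prime := Nat.Prime.not_prime_pow' h1
      simp [h1, hnp]
  · apply Finset.sum_nonneg
    intro q _
    have := hl q
    positivity

open Classical in
lemma mertens_T : ∃ (B : ℕ) (C : ℝ), 1 ≤ B ∧ 0 ≤ C ∧ ∀ T : ℕ, 1 ≤ T → 
    |Mer K (B * T ^ Module.finrank ℤ (𝓞 K)) - Module.finrank ℤ (𝓞 K) * Real.log T| ≤ C := by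
  obtain ⟨M, B, hB, hMB⟩ := norm_shift K
  obtain ⟨C₁, hC₁, h₁⟩ := count_approx K B
  obtain ⟨C₂, hC₂, h₂⟩ := QS_Mer_bound (K := K)
  obtain ⟨C₃, hC₃, h₃⟩ := aux_lam_pow (Module.finrank ℤ (𝓞 K)) finrank_pos'
  set d := Module.finrank ℤ (𝓞 K) with hd
  have hdpos : 0 < d := finrank_pos'
  have hd0 : (0:ℝ) < d := by exact_mod_cast hdpos
  refine ⟨B, Real.log B + C₂ + C₁ * ((d:ℝ)^2 * (C₃ * B)), hB, by positivity, fun T hT => ?_⟩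
  set x := B * T ^ d with hx
  have hT' : (1:ℝ) ≤ T := by exact_mod_cast hT
  have hB' : (1:ℝ) ≤ B := by exact_mod_cast hB
  set V : ℝ := (2 * (T:ℝ) + 1)^d with hV
  have hVpos : 0 < V := by positivity
  set J : 𝓞 K → Ideal (𝓞 K) := fun y => Ideal.span {((M * T : ℕ) : 𝓞 K) + y} with hJ
  set cnt : Ideal (𝓞 K) × ℕ → ℝ := fun q => (((obox K T).filter (fun y => Ideal.Quotient.mk (q.1 ^ q.2) y = 
    Ideal.Quotient.mk (q.1 ^ q.2) (-((M * T : ℕ) : 𝓞 K)))).card : ℝ) with hcnt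
  have hcardV : ((obox K T).card : ℝ) = V := by rw [card_obox]; push_cast; rfl
  have hS : ∑ y ∈ obox K T, Real.log (Ideal.absNorm (J y)) = 
      ∑ q ∈ QS K x, Real.log (Ideal.absNorm q.1) * cnt q := by
    have h4 : ∀ y ∈ obox K T, Real.log (Ideal.absNorm (J y)) = 
        ∑ q ∈ QS K x, if q.1 ^ q.2 ∣ J y then Real.log (Ideal.absNorm q.1) else 0 := by
      intro y hy
      have h5 := hMB T hT y hy
      refine log_absNorm ?_ x h5.2
      have : 0 < T ^ d := by positivity
      intro h0
      have h6 := h5.1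
      rw [show Ideal.span {((M * T : ℕ) : 𝓞 K) + y} = J y from rfl, h0, Ideal.absNorm_bot] at h6
      omega
    rw [Finset.sum_congr rfl h4, Finset.sum_comm]
    refine Finset.sum_congr rfl fun q _ => ?_
    rw [← Finset.sum_filter, Finset.sum_const, nsmul_eq_mul, mul_comm, hcnt]
    congr 3
    ext y
    rw [Finset.mem_filter, Finset.mem_filter]
    refine and_congr_right fun _ => ?_
    rw [hJ, Ideal.dvd_span_singleton, Ideal.Quotient.eq]
    rw [sub_neg_eq_add, add_comm]
  have hLlo : V * (d * Real.log T) ≤ ∑ y ∈ obox K T, Real.log (Ideal.absNorm (J y)) := by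
    rw [← hcardV, ← nsmul_eq_mul, ← Finset.sum_const]
    apply Finset.sum_le_sum
    intro y hy
    rw [← Real.log_pow]
    apply Real.log_le_log (by positivity)
    exact_mod_cast (hMB T hT y hy).1
  have hLhi : ∑ y ∈ obox K T, Real.log (Ideal.absNorm (J y)) ≤ V * (d * Real.log T + Real.log B) := by
    rw [← hcardV, ← nsmul_eq_mul, ← Finset.sum_const]
    apply Finset.sum_le_sum
    intro y hy
    rw [← Real.log_pow, ← Real.log_mul (by positivity) (by positivity), mul_comm]
    apply Real.log_le_log
    · have h5 := (hMB T hT y hy).1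
      have : 0 < T ^ d := by positivity
      exact_mod_cast (lt_of_lt_of_le this h5)
    · exact_mod_cast (hMB T hT y hy).2
  set Z := ∑ q ∈ QS K x, Real.log (Ideal.absNorm q.1) * ((1:ℝ)/(Ideal.absNorm q.1 ^ q.2 : ℕ)) with hZ
  have hE : |∑ q ∈ QS K x, Real.log (Ideal.absNorm q.1) * cnt q - V * Z| ≤ V * (C₁ * ((d:ℝ)^2 * (C₃ * B))) := by
    rw [hZ, Finset.mul_sum, ← Finset.sum_sub_distrib]
    refine (Finset.abs_sum_le_sum_abs _ _).trans ?_
    have h7 : ∀ q ∈ QS K x, |Real.log (Ideal.absNorm q.1) * cnt q - V * (Real.log (Ideal.absNorm q.1) * ((1:ℝ)/(Ideal.absNorm q.1 ^ q.2 : ℕ)))| ≤ 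
        C₁ * (T:ℝ)^(d-1) * (Real.log (Ideal.absNorm q.1) * ((Ideal.absNorm q.1 ^ q.2 : ℕ) : ℝ)^((1:ℝ)/d - 1)) := by
      intro q hq
      rw [mem_QS] at hq
      have hl : 0 ≤ Real.log (Ideal.absNorm q.1) := Real.log_natCast_nonneg _
      have h8 := h₁ (q.1 ^ q.2) (pow_ne_zero _ hq.2.1) T hT (by rw [map_pow]; exact hq.2.2.2) 
        (Ideal.Quotient.mk (q.1 ^ q.2) (-((M * T : ℕ) : 𝓞 K)))
      rw [map_pow] at h8
      calc _ = Real.log (Ideal.absNorm q.1) * |cnt q - V / (Ideal.absNorm q.1 ^ q.2 : ℕ)| := by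
            rw [← abs_of_nonneg hl, ← abs_mul, abs_of_nonneg hl]; congr 1; ring
        _ ≤ Real.log (Ideal.absNorm q.1) * _ := mul_le_mul_of_nonneg_left h8 hl
        _ = _ := by ring
    refine (Finset.sum_le_sum h7).trans ?_
    rw [← Finset.mul_sum]
    have h9 := logsum (K := K) (fun n => (n:ℝ)^((1:ℝ)/d - 1)) (fun n => by positivity) x
    have h10 := h₃ x
    have h11 : (x:ℝ)^((1:ℝ)/d) ≤ B * T := by
      have h12 : (x:ℝ) ≤ ((B:ℝ) * T)^d := by
        rw [hx, mul_pow]; push_cast; gcongr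
        exact le_self_pow₀ hB' hdpos.ne'
      calc _ ≤ (((B:ℝ) * T)^d)^((1:ℝ)/d) := by gcongr
        _ = _ := by
          rw [← Real.rpow_natCast, ← Real.rpow_mul (by positivity), mul_one_div_cancel hd0.ne', Real.rpow_one]
    have hTV : (T:ℝ)^d ≤ V := by rw [hV]; gcongr; linarith
    calc _ ≤ C₁ * (T:ℝ)^(d-1) * ((d:ℝ)^2 * (C₃ * (B * T))) := by
          gcongr
          refine h9.trans ?_
          gcongr
          exact h10.trans (by gcongr)
      _ = (T:ℝ)^d * (C₁ * ((d:ℝ)^2 * (C₃ * B))) := by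
          obtain ⟨e, he⟩ : ∃ e, d = e + 1 := ⟨d - 1, by omega⟩
          rw [he, Nat.add_sub_cancel, pow_succ]; ring
      _ ≤ _ := by gcongr
  have hM := h₂ x
  rw [← hZ] at hM
  rw [← hS] at hE
  have hZb : |Z - d * Real.log T| ≤ Real.log B + C₁ * ((d:ℝ)^2 * (C₃ * B)) := by
    have hlB : 0 ≤ Real.log B := Real.log_nonneg hB'
    rw [abs_le] at hE ⊢
    constructor
    · apply le_of_mul_le_mul_left _ hVpos
      nlinarith
    · apply le_of_mul_le_mul_left _ hVpos
      nlinarith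
  rw [abs_le] at *
  constructor <;> linarith

variable (K) in
lemma mertens : ∃ C : ℝ, 0 ≤ C ∧ ∀ x : ℕ, 1 ≤ x → |Mer K x - Real.log x| ≤ C := by
  obtain ⟨B, C, hB, hC, h⟩ := mertens_T (K := K)
  set d := Module.finrank ℤ (𝓞 K) with hd
  have hdpos : 0 < d := finrank_pos'
  have hB' : (1:ℝ) ≤ B := by exact_mod_cast hB
  have hlB : 0 ≤ Real.log B := Real.log_nonneg hB'
  have hl2 : 0 ≤ Real.log 2 := Real.log_nonneg (by norm_num)
  refine ⟨C + Real.log B + d * Real.log 2, by positivity, fun x hx => ?_⟩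
  have hx' : (1:ℝ) ≤ x := by exact_mod_cast hx
  have hlx : 0 ≤ Real.log x := Real.log_nonneg hx'
  have hdl : 0 ≤ d * Real.log 2 := by positivity
  by_cases hxB : x < B
  · have h1 := h 1 le_rfl
    simp only [one_pow, mul_one, Nat.cast_one, Real.log_one, mul_zero, sub_zero] at h1
    have h2 := Mer_mono (K := K) hxB.le
    have h3 := Mer_nonneg (K := K) x
    have h4 : Real.log x ≤ Real.log B := Real.log_le_log (by linarith) (by exact_mod_cast hxB.le)
    rw [abs_le] at *
    constructor <;> linarith
  · push Not at hxB
    obtain ⟨T, hT1, hT2⟩ := exists_nroot d (x / B) hdpos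
    have hT : 1 ≤ T := by
      rcases Nat.eq_zero_or_pos T with h0 | h0
      · rw [h0, zero_add, one_pow] at hT2
        have := Nat.div_pos hxB hB
        omega
      · exact h0
    have h1 : B * T ^ d ≤ x := (Nat.mul_le_mul_left _ hT1).trans (Nat.mul_div_le _ _)
    have h2 : x ≤ B * (T+1) ^ d := by
      rw [Nat.div_lt_iff_lt_mul hB] at hT2
      rw [mul_comm]; exact hT2.le
    have h3 := h T hT
    have h4 := h (T+1) (by omega)
    have h5 := Mer_mono (K := K) h1
    have h6 := Mer_mono (K := K) h2
    have hT' : (1:ℝ) ≤ T := by exact_mod_cast hT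
    have h7 : Real.log ((T+1 : ℕ):ℝ) ≤ Real.log T + Real.log 2 := by
      rw [← Real.log_mul (by positivity) (by norm_num)]
      apply Real.log_le_log (by positivity)
      push_cast; linarith
    have h8 : Real.log B + d * Real.log T ≤ Real.log x := by
      rw [← Real.log_pow, ← Real.log_mul (by positivity) (by positivity)]
      exact Real.log_le_log (by positivity) (by exact_mod_cast h1)
    have h9 : Real.log x ≤ Real.log B + d * Real.log ((T+1:ℕ):ℝ) := by
      rw [← Real.log_pow, ← Real.log_mul (by positivity) (by positivity)]
      exact Real.log_le_log (by positivity) (by exact_mod_cast h2)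
    have h10 : d * Real.log ((T+1 : ℕ):ℝ) ≤ d * Real.log T + d * Real.log 2 := by
      rw [← mul_add]; gcongr
    rw [abs_le] at *
    constructor <;> linarith
end


lemma gap_card (s : Finset ℤ) (Y g : ℝ) (hY : 0 ≤ Y) (hg : 0 < g)
    (hs : ∀ n ∈ s, Y < (n:ℝ) ∧ (n:ℝ) < 2 * Y)
    (hgap : ∀ n ∈ s, ∀ n' ∈ s, n < n' → g ≤ (n':ℝ) - n) : (s.card : ℝ) ≤ Y / g + 1 := by
  have h1 : s.card ≤ (Finset.range (⌊Y/g⌋₊ + 1)).card := by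
    apply Finset.card_le_card_of_injOn (fun n : ℤ => ⌊((n:ℝ) - Y)/g⌋₊)
    · intro n hn
      have := hs n hn
      simp only [Finset.coe_range, Set.mem_Iio]
      apply Nat.lt_succ_of_le
      apply Nat.floor_le_floor
      gcongr
      linarith
    · have key : ∀ n ∈ s, ∀ n' ∈ s, n < n' → ⌊((n:ℝ) - Y)/g⌋₊ ≠ ⌊((n':ℝ) - Y)/g⌋₊ := by
        intro n hn n' hn' hlt he
        have h0 := hs n hn
        have h0' := hs n' hn'
        have a1 : (⌊((n:ℝ) - Y)/g⌋₊ : ℝ) ≤ ((n:ℝ) - Y)/g := 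
          Nat.floor_le (div_nonneg (by linarith) hg.le)
        have a2 : ((n':ℝ) - Y)/g < ⌊((n':ℝ) - Y)/g⌋₊ + 1 := Nat.lt_floor_add_one _
        rw [← he] at a2
        have a3 := hgap n hn n' hn' hlt
        have a4 : ((n':ℝ) - Y)/g < ((n:ℝ) - Y)/g + 1 := by linarith
        rw [div_lt_iff₀ hg, add_mul, div_mul_cancel₀ _ hg.ne'] at a4
        linarith
      intro n hn n' hn' he
      rcases lt_trichotomy n n' with h | h | h
      · exact absurd he (key n hn n' hn' h)
      · exact h
      · exact absurd he.symm (key n' hn' n hn h)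
  rw [Finset.card_range] at h1
  have h2 : (⌊Y/g⌋₊ : ℝ) ≤ Y/g := Nat.floor_le (by positivity)
  have h3 : (s.card : ℝ) ≤ ⌊Y/g⌋₊ + 1 := by exact_mod_cast h1
  linarith

noncomputable def JJ (Y : ℝ) : Finset ℤ := Finset.Ioo ⌊Y⌋ ⌈2*Y⌉

lemma mem_JJ {Y : ℝ} {n : ℤ} : n ∈ JJ Y ↔ Y < (n:ℝ) ∧ (n:ℝ) < 2 * Y := by
  rw [JJ, Finset.mem_Ioo, Int.floor_lt, Int.lt_ceil]

lemma class_card (Y : ℝ) (hY : 0 ≤ Y) (p : ℕ) (hp : 1 ≤ p) (a : ℤ) :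
    Y / p - 2 ≤ (((JJ Y).filter (fun n => (p:ℤ) ∣ n - a)).card : ℝ) := by
  have hp' : (1:ℝ) ≤ p := by exact_mod_cast hp
  have h1 : (JJ Y).filter (fun n => (p:ℤ) ∣ n - a) = 
      (Finset.Ioc ⌊Y⌋ (⌈2*Y⌉-1)).filter (fun n => n ≡ a [ZMOD (p:ℤ)]) := by
    ext n
    simp only [Finset.mem_filter, JJ, Finset.mem_Ioo, Finset.mem_Ioc]
    rw [Int.modEq_comm, Int.modEq_iff_dvd]
    constructor <;> (rintro ⟨⟨h1,h2⟩,h3⟩; exact ⟨⟨h1, by omega⟩, h3⟩)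
  rw [h1]
  have h2 := Int.Ioc_filter_modEq_card ⌊Y⌋ (⌈2*Y⌉-1) (r := (p:ℤ)) (by exact_mod_cast hp) a
  have h3 : (((Finset.Ioc ⌊Y⌋ (⌈2*Y⌉-1)).filter (fun n => n ≡ a [ZMOD (p:ℤ)])).card : ℝ) ≥ 
     ((⌊((⌈2*Y⌉-1 : ℤ) - (a:ℚ)) / ((p:ℤ):ℚ)⌋ - ⌊((⌊Y⌋:ℤ) - (a:ℚ)) / ((p:ℤ):ℚ)⌋ : ℤ) : ℝ) := by
    have : (((((Finset.Ioc ⌊Y⌋ (⌈2*Y⌉-1)).filter (fun n => n ≡ a [ZMOD (p:ℤ)])).card : ℤ)) : ℝ) ≥ 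
     ((⌊((⌈2*Y⌉-1 : ℤ) - (a:ℚ)) / ((p:ℤ):ℚ)⌋ - ⌊((⌊Y⌋:ℤ) - (a:ℚ)) / ((p:ℤ):ℚ)⌋ : ℤ) : ℝ) := by
      rw [h2]
      exact_mod_cast le_max_left _ _
    exact_mod_cast this
  refine le_trans ?_ h3
  have h4 := Int.sub_one_lt_floor (((⌈2*Y⌉-1 : ℤ) - (a:ℚ)) / ((p:ℤ):ℚ))
  have h5 := Int.floor_le (((⌊Y⌋:ℤ) - (a:ℚ)) / ((p:ℤ):ℚ))
  set u := ⌊((⌈2*Y⌉-1 : ℤ) - (a:ℚ)) / ((p:ℤ):ℚ)⌋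
  set v := ⌊((⌊Y⌋:ℤ) - (a:ℚ)) / ((p:ℤ):ℚ)⌋
  have h4' : (((⌈2*Y⌉-1 : ℤ) - (a:ℝ)) / (p:ℝ)) - 1 < u := by exact_mod_cast (Rat.cast_lt (K := ℝ)).2 h4
  have h5' : (v:ℝ) ≤ (((⌊Y⌋:ℤ) - (a:ℝ)) / (p:ℝ)) := by exact_mod_cast (Rat.cast_le (K := ℝ)).2 h5
  have h6 := Int.le_ceil (2*Y)
  have h7 := Int.floor_le Y
  have h8 : (Y - 1)/p ≤ (((⌈2*Y⌉-1 : ℤ) - (a:ℝ)) / (p:ℝ)) - (((⌊Y⌋:ℤ) - (a:ℝ)) / (p:ℝ)) := by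
    rw [← sub_div]
    refine div_le_div_of_nonneg_right ?_ (by linarith)
    push_cast
    linarith
  have h9 : (Y-1)/p = Y/p - 1/p := sub_div _ _ _
  have h10 : (1:ℝ)/p ≤ 1 := by rw [div_le_one (by linarith)]; exact hp'
  push_cast
  linarith

lemma geom_bd (q : ℝ) (h0 : 0 ≤ q) (h1 : q < 1) (L : ℕ) : ∑ k ∈ Finset.Icc 1 L, q^k ≤ q/(1-q) := by
  have h : ∀ L : ℕ, ∑ k ∈ Finset.Icc 1 L, q^k = (q - q^(L+1))/(1-q) := by
    intro L
    have : (1-q) ≠ 0 := by linarith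
    induction L with
    | zero => simp
    | succ L ih => 
      rw [Finset.sum_Icc_succ_top (by omega), ih]
      field_simp
      ring
  rw [h]
  have : 0 ≤ q^(L+1) := by positivity
  have : 0 < 1 - q := by linarith
  gcongr
  linarith

lemma geom_bd2 (q : ℝ) (h0 : 0 ≤ q) (h1 : q ≤ 1/2) (L : ℕ) : ∑ k ∈ Finset.Icc 1 L, q^k ≤ q+2*q^2 := by
  refine (geom_bd q h0 (by linarith) L).trans ?_
  rw [div_le_iff₀ (by linarith)]
  nlinarith [mul_nonneg (sq_nonneg q) (by linarith : 0 ≤ 1 - 2*q)]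

section
variable {K : Type*} [Field K] [NumberField K]

lemma exists_int_of_prime_norm {P : Ideal (𝓞 K)} {p : ℕ} (hp : p.Prime) (h : Ideal.absNorm P = p)
    (x : 𝓞 K) : ∃ a : ℤ, (a : 𝓞 K) - x ∈ P := by
  have hc : Nat.card (𝓞 K ⧸ P) = p := h
  have hfin : Finite (𝓞 K ⧸ P) := Nat.finite_of_card_ne_zero (by rw [hc]; exact hp.ne_zero)
  have := Fintype.ofFinite (𝓞 K ⧸ P)
  rw [Nat.card_eq_fintype_card] at hc
  have e := ZMod.ringEquivOfPrime (𝓞 K ⧸ P) hp hc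
  obtain ⟨z, hz⟩ := e.surjective (Ideal.Quotient.mk P x)
  obtain ⟨a, ha⟩ := ZMod.intCast_surjective z
  refine ⟨a, ?_⟩
  rw [← Ideal.Quotient.eq, ← hz, ← ha]
  simp

lemma norm_prime_of {P : Ideal (𝓞 K)} (hP : P.IsPrime) (h0 : P ≠ ⊥) (rO : 𝓞 K)
    (hE : ¬ conductor ℤ rO ≤ P) (n : ℤ) (hn : (n : 𝓞 K) - rO ∈ P) : (Ideal.absNorm P).Prime := by
  obtain ⟨p, k, hp, hpP, hN, hk, -⟩ := exists_p hP h0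
  obtain ⟨c, hc, hcP⟩ := Set.not_subset.1 hE
  have hmax : P.IsMaximal := hP.isMaximal h0
  -- every element of ℤ[r] is an integer mod P
  have h1 : ∀ y ∈ Algebra.adjoin ℤ {rO}, ∃ a : ℤ, y - a ∈ P := by
    intro y hy
    rw [Algebra.adjoin_singleton_eq_range_aeval] at hy
    obtain ⟨q, rfl⟩ := hy
    refine ⟨q.eval n, ?_⟩
    have h2 : ((q.eval n : ℤ) : 𝓞 K) = aeval (n : 𝓞 K) q := by
      rw [← eq_intCast (algebraMap ℤ (𝓞 K)) n, aeval_algebraMap_apply]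
      simp
    rw [h2]
    have h3 : rO - n ∣ aeval rO q - aeval (n : 𝓞 K) q := by
      rw [aeval_def, aeval_def, ← eval_map, ← eval_map]
      exact sub_dvd_eval_sub _ _ _
    obtain ⟨w, hw⟩ := h3
    have h4 : aeval rO q - aeval (n : 𝓞 K) q = ((n : 𝓞 K) - rO) * (-w) := by rw [hw]; ring
    exact h4 ▸ P.mul_mem_right _ hn
  have hsurj : ∀ x : 𝓞 K, ∃ a : ℤ, x - a ∈ P := by
    obtain ⟨u, hu⟩ : ∃ u, c * u - 1 ∈ P := by
      obtain ⟨u, hu, i, hi⟩ := hmax.exists_inv hcP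
      refine ⟨u, ?_⟩
      have : c * u - 1 = - hu := by rw [← hi]; ring
      rw [this]; exact P.neg_mem i
    intro x
    obtain ⟨a, ha⟩ := h1 _ (mem_conductor_iff.1 hc (u * x))
    refine ⟨a, ?_⟩
    have : x - a = (c * (u*x) - a) - (c*u-1) * x := by ring
    rw [this]
    exact P.sub_mem ha (P.mul_mem_right _ hu)
  have hle : Ideal.absNorm P ≤ p := by
    have : NeZero p := ⟨hp.ne_zero⟩
    have hf : Function.Surjective (fun i : Fin p => Ideal.Quotient.mk P ((i : ℕ) : 𝓞 K)) := by
      intro x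
      obtain ⟨x, rfl⟩ := Ideal.Quotient.mk_surjective x
      obtain ⟨a, ha⟩ := hsurj x
      have hpos : (0:ℤ) < p := by exact_mod_cast hp.pos
      have e1 := Int.emod_nonneg a hpos.ne'
      have e2 := Int.emod_lt_of_pos a hpos
      refine ⟨⟨(a % p).toNat, by omega⟩, ?_⟩
      symm
      rw [Ideal.Quotient.eq]
      have e3 : (((a % p).toNat : ℕ) : 𝓞 K) = ((a % p : ℤ) : 𝓞 K) := by
        rw [← Int.cast_natCast, Int.toNat_of_nonneg e1]
      have e4 : (a : 𝓞 K) = ((a % p : ℤ) : 𝓞 K) + (p : 𝓞 K) * ((a / p : ℤ) : 𝓞 K) := by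
        have := (Int.emod_add_mul_ediv a p)
        exact_mod_cast this.symm
      have e5 : x - (((a % p).toNat : ℕ) : 𝓞 K) = (x - a) + (p : 𝓞 K) * ((a / p : ℤ) : 𝓞 K) := by
        rw [e3, e4]; ring
      simp only
      rw [e5]
      exact P.add_mem ha (P.mul_mem_right _ hpP)
    have := Nat.card_le_card_of_surjective _ hf
    rw [Nat.card_fin] at this
    exact this
  have : k = 1 := by
    by_contra hk1
    have : p^2 ≤ p^k := Nat.pow_le_pow_right hp.pos (by omega)
    have h2 := hp.two_le
    rw [hN] at hle
    nlinarith
  rw [hN, this, pow_one]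
  exact hp

lemma int_dvd_of {P : Ideal (𝓞 K)} (hP : P.IsPrime) (h0 : P ≠ ⊥) {p : ℕ} (hp : p.Prime)
    (hpP : (p : 𝓞 K) ∈ P) (hE : ¬ P ∣ differentIdeal ℤ (𝓞 K)) (k : ℕ) : 
    ∀ z : ℤ, (z : 𝓞 K) ∈ P ^ k → (p:ℤ)^k ∣ z := by
  have hPp := Ideal.prime_of_isPrime h0 hP
  have hsp : P ∣ Ideal.span {(p : 𝓞 K)} := by
    rw [Ideal.dvd_span_singleton]; exact hpP
  obtain ⟨I, hI⟩ := hsp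
  have hnI : ¬ P ∣ I := by
    intro h
    have hmx : (Ideal.span {(p:ℤ)}).IsMaximal := by
      have := (Ideal.span_singleton_prime (p := (p:ℤ)) (by exact_mod_cast hp.ne_zero)).2 (Nat.prime_iff_prime_int.1 hp)
      apply this.isMaximal
      simpa using hp.ne_zero
    have := pow_sub_one_dvd_differentIdeal ℤ (p := Ideal.span {(p:ℤ)}) P 2 (by simpa using hp.ne_zero) (by
      rw [Ideal.map_span, Set.image_singleton, map_natCast, hI, pow_two]
      exact mul_dvd_mul_left _ h)
    simp at this
    exact hE (by simpa using this)
  induction k with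
  | zero => intro z _; simp
  | succ k ih =>
    intro z hz
    have hz1 : (z : 𝓞 K) ∈ P := Ideal.pow_le_self (by omega) hz
    have hpz : (p:ℤ) ∣ z := by
      by_contra hnd
      have hco : IsCoprime (p:ℤ) z := by
        rw [Int.isCoprime_iff_gcd_eq_one]
        have := (Nat.Prime.coprime_iff_not_dvd hp (n := z.natAbs)).2 (fun h => hnd (Int.natCast_dvd.2 h))
        simpa [Int.gcd] using this
      obtain ⟨a, b, hab⟩ := hco
      apply hP.ne_top
      rw [Ideal.eq_top_iff_one]
      have : (1 : 𝓞 K) = (a : 𝓞 K) * (p : 𝓞 K) + b * z := by exact_mod_cast hab.symm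
      rw [this]
      exact P.add_mem (P.mul_mem_left _ hpP) (P.mul_mem_left _ hz1)
    obtain ⟨w, rfl⟩ := hpz
    have hd : P ^ (k+1) ∣ Ideal.span {(((p:ℤ) * w : ℤ) : 𝓞 K)} := Ideal.dvd_span_singleton.2 hz
    have hsp : Ideal.span {(((p:ℤ) * w : ℤ) : 𝓞 K)} = P * (I * Ideal.span {(w : 𝓞 K)}) := by
      rw [← mul_assoc, ← hI, Ideal.span_singleton_mul_span_singleton]
      push_cast; rfl
    rw [hsp, pow_succ', mul_dvd_mul_iff_left hPp.ne_zero] at hd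
    have hd2 := hPp.pow_dvd_of_dvd_mul_left k hnI hd
    rw [pow_succ']
    exact mul_dvd_mul_left _ (ih w (Ideal.dvd_span_singleton.1 hd2))

lemma exceptional (r : K) (hgen : Algebra.adjoin ℚ {r} = ⊤)
    (rO : 𝓞 K) (hrO : algebraMap (𝓞 K) K rO = r) : ∃ E : Finset (Ideal (𝓞 K)),
    ∀ P : Ideal (𝓞 K), P.IsPrime → P ≠ ⊥ → P ∉ E → ¬ conductor ℤ rO ≤ P ∧ ¬ P ∣ differentIdeal ℤ (𝓞 K) := by
  classical
  have h := conductor_mul_differentIdeal ℤ ℚ K rO (by rw [hrO]; exact hgen)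
  have hne : aeval rO (derivative (minpoly ℤ rO)) ≠ 0 := by
    intro h0
    have hint : IsIntegral ℤ rO := IsIntegralClosure.isIntegral ℤ K rO
    have hm := minpoly.isIntegrallyClosed_dvd hint h0
    have hmon := minpoly.monic hint
    have hpos := minpoly.natDegree_pos hint
    have hdne : derivative (minpoly ℤ rO) ≠ 0 := by
      intro hd
      have := natDegree_eq_zero_of_derivative_eq_zero hd
      omega
    have h1 := natDegree_le_of_dvd hm hdne
    have h2 := natDegree_derivative_lt (p := minpoly ℤ rO) (by omega)
    omega
  set F := Ideal.span {aeval rO (derivative (minpoly ℤ rO))} with hF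
  have hF0 : F ≠ ⊥ := by rw [hF, Ne, Ideal.span_singleton_eq_bot]; exact hne
  refine ⟨(UniqueFactorizationMonoid.normalizedFactors F).toFinset, fun P hP h0 hPE => ?_⟩
  have hnd : ¬ P ∣ F := by
    intro hd
    apply hPE
    rw [Multiset.mem_toFinset, Ideal.mem_normalizedFactors_iff hF0]
    exact ⟨hP, Ideal.dvd_iff_le.1 hd⟩
  rw [← h] at hnd
  exact ⟨fun hle => hnd (dvd_mul_of_dvd_left (Ideal.dvd_iff_le.2 hle) _), fun hd => hnd (dvd_mul_of_dvd_right hd _)⟩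
end


section
variable {K : Type*} [Field K] [NumberField K]

open Classical in
noncomputable def WW (rO : 𝓞 K) (P : Ideal (𝓞 K)) (Y : ℝ) : ℝ :=
  ∑ n ∈ JJ Y, (Multiset.count P (UniqueFactorizationMonoid.normalizedFactors
            (Ideal.span {(n : 𝓞 K) - rO})) : ℝ)

lemma norm_ok (rO : 𝓞 K) : ∃ B : ℝ, 1 ≤ B ∧ ∀ Y, B ≤ Y → ∀ n ∈ JJ Y, 
    Ideal.span {(n : 𝓞 K) - rO} ≠ ⊥ ∧ 
    (Ideal.absNorm (Ideal.span {(n : 𝓞 K) - rO}) : ℝ) ≤ (3 * Y) ^ Module.finrank ℤ (𝓞 K) := by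
  classical
  set b : ℝ := ∑ σ : K →ₐ[ℚ] ℂ, ‖σ (algebraMap (𝓞 K) K rO)‖ with hb
  have hb0 : 0 ≤ b := by positivity
  refine ⟨b + 1, by linarith, fun Y hY n hn => ?_⟩
  rw [mem_JJ] at hn
  have hσ : ∀ σ : K →ₐ[ℚ] ℂ, ‖σ (algebraMap (𝓞 K) K rO)‖ ≤ b := fun σ =>
    Finset.single_le_sum (f := fun σ : K →ₐ[ℚ] ℂ => ‖σ (algebraMap (𝓞 K) K rO)‖)
          (fun _ _ => by positivity) (Finset.mem_univ σ)
  have hn' : ‖((n:ℤ):ℂ)‖ = n := by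
    rw [Complex.norm_intCast, abs_of_pos]; linarith
  have he : ∀ σ : K →ₐ[ℚ] ℂ, σ (algebraMap (𝓞 K) K ((n : 𝓞 K) - rO)) = (n:ℂ) - σ (algebraMap (𝓞 K) K rO) := by
    intro σ; simp
  have := norm_bounds ((n : 𝓞 K) - rO) 1 (3 * Y) zero_le_one ?_ ?_
  · refine ⟨?_, this.2⟩
    intro h
    have h1 := this.1
    rw [h] at h1
    simp at h1
    linarith
  · intro σ
    rw [he]
    have := norm_sub_norm_le (n:ℂ) (σ (algebraMap (𝓞 K) K rO))
    have := hσ σ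
    linarith
  · intro σ
    rw [he]
    have := norm_sub_le (n:ℂ) (σ (algebraMap (𝓞 K) K rO))
    have := hσ σ
    linarith

lemma W_upper (rO : 𝓞 K) {P : Ideal (𝓞 K)} (hP : P.IsPrime) (h0 : P ≠ ⊥) (Y : ℝ) (hY : 1 ≤ Y)
    (hn : ∀ n ∈ JJ Y, 
    Ideal.span {(n : 𝓞 K) - rO} ≠ ⊥ ∧ 
    (Ideal.absNorm (Ideal.span {(n : 𝓞 K) - rO}) : ℝ) ≤ (3 * Y) ^ Module.finrank ℤ (𝓞 K))
    (g : ℕ → ℝ) (hg : ∀ k, 0 < g k)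
    (hgap : ∀ k, 1 ≤ k → ∀ n n' : ℤ, n < n' → (n : 𝓞 K) - rO ∈ P ^ k → (n' : 𝓞 K) - rO ∈ P ^ k →
      g k ≤ (n':ℝ) - n) (G : ℝ) (hG : ∀ L : ℕ, ∑ k ∈ Finset.Icc 1 L, 1 / g k ≤ G) :
    Real.log (Ideal.absNorm P) * WW rO P Y ≤ 
      Real.log (Ideal.absNorm P) * Y * G + Module.finrank ℤ (𝓞 K) * Real.log (3 * Y) := by
  classical
  have h2 := two_le_absNorm hP h0
  have h2' : (2:ℝ) ≤ Ideal.absNorm P := by exact_mod_cast h2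
  have hlog : 0 < Real.log (Ideal.absNorm P) := Real.log_pos (by linarith)
  have hl3 : 0 ≤ Real.log (3*Y) := Real.log_nonneg (by linarith)
  set d := Module.finrank ℤ (𝓞 K) with hd
  set L := ⌊d * Real.log (3*Y) / Real.log (Ideal.absNorm P)⌋₊ with hL
  have hLle : (L:ℝ) * Real.log (Ideal.absNorm P) ≤ d * Real.log (3*Y) := by
    rw [← le_div_iff₀ hlog]
    exact Nat.floor_le (by positivity)
  have hLb : ∀ n ∈ JJ Y, ∀ k, P ^ k ∣ Ideal.span {(n : 𝓞 K) - rO} → k ≤ L := by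
    intro n hnJ k hk
    obtain ⟨a1, a2⟩ := hn n hnJ
    have hne : Ideal.absNorm (Ideal.span {(n : 𝓞 K) - rO}) ≠ 0 := by rwa [Ne, Ideal.absNorm_eq_zero_iff]
    have h3 := Nat.le_of_dvd (by omega) (map_dvd Ideal.absNorm hk)
    rw [map_pow] at h3
    have h4 : ((Ideal.absNorm P : ℝ))^k ≤ (3*Y)^d := le_trans (by exact_mod_cast h3) a2
    have h5 := Real.log_le_log (by positivity) h4
    rw [Real.log_pow, Real.log_pow] at h5
    rw [hL]
    apply Nat.le_floor
    rw [le_div_iff₀ hlog]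
    exact h5
  have hW : WW rO P Y = ∑ k ∈ Finset.Icc 1 L, (((JJ Y).filter (fun n : ℤ => P^k ∣ Ideal.span {(n : 𝓞 K) - rO})).card : ℝ) := by
    unfold WW
    rw [Finset.sum_congr rfl (fun n hnJ => by 
      rw [count_eq_sum hP h0 (hn n hnJ).1 L (hLb n hnJ), Finset.card_filter])]
    simp_rw [Finset.card_filter]
    push_cast
    rw [Finset.sum_comm]
  have hW2 : WW rO P Y ≤ ∑ k ∈ Finset.Icc 1 L, (Y / g k + 1) := by
    rw [hW]
    refine Finset.sum_le_sum fun k hk => ?_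
    rw [Finset.mem_Icc] at hk
    refine gap_card _ Y (g k) (by linarith) (hg k) ?_ ?_
    · intro n hn
      exact mem_JJ.1 (Finset.mem_filter.1 hn).1
    · intro n hn n' hn' hlt
      exact hgap k hk.1 n n' hlt (Ideal.dvd_span_singleton.1 (Finset.mem_filter.1 hn).2) 
        (Ideal.dvd_span_singleton.1 (Finset.mem_filter.1 hn').2)
  have hW3 : ∑ k ∈ Finset.Icc 1 L, (Y / g k + 1) ≤ Y * G + L := by
    rw [Finset.sum_add_distrib]
    simp only [Finset.sum_const, Nat.card_Icc, Nat.add_sub_cancel, nsmul_eq_mul, mul_one]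
    have : ∑ k ∈ Finset.Icc 1 L, Y / g k = Y * ∑ k ∈ Finset.Icc 1 L, 1 / g k := by
      rw [Finset.mul_sum]; exact Finset.sum_congr rfl fun k _ => by ring
    rw [this]
    have := mul_le_mul_of_nonneg_left (hG L) (by linarith : 0 ≤ Y)
    linarith
  calc _ ≤ Real.log (Ideal.absNorm P) * (Y * G + L) := by
        gcongr; exact hW2.trans hW3
    _ ≤ _ := by linarith

lemma W_generic (rO : 𝓞 K) {P : Ideal (𝓞 K)} (hP : P.IsPrime) (h0 : P ≠ ⊥) (Y : ℝ) (hY : 1 ≤ Y)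
    (hn : ∀ n ∈ JJ Y, 
    Ideal.span {(n : 𝓞 K) - rO} ≠ ⊥ ∧ 
    (Ideal.absNorm (Ideal.span {(n : 𝓞 K) - rO}) : ℝ) ≤ (3 * Y) ^ Module.finrank ℤ (𝓞 K))
    (hE1 : ¬ conductor ℤ rO ≤ P) (hE2 : ¬ P ∣ differentIdeal ℤ (𝓞 K)) : 
    Real.log (Ideal.absNorm P) * WW rO P Y ≤ 
      Y * (Real.log (Ideal.absNorm P) / Ideal.absNorm P) + 
      2 * Y * (Real.log (Ideal.absNorm P) / (Ideal.absNorm P : ℝ)^2)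
       + Module.finrank ℤ (𝓞 K) * Real.log (3 * Y) := by
  have h2 := two_le_absNorm hP h0
  have h2' : (2:ℝ) ≤ Ideal.absNorm P := by exact_mod_cast h2
  have := W_upper rO hP h0 Y hY hn (fun k => (Ideal.absNorm P : ℝ)^k) (fun k => by positivity) ?_
    (1/(Ideal.absNorm P : ℝ) + 2 * (1/(Ideal.absNorm P : ℝ))^2) ?_
  · refine this.trans (le_of_eq ?_)
    field_simp
  · intro k hk n n' hlt hn hn'
    have hpr := norm_prime_of hP h0 rO hE1 n (Ideal.pow_le_self (by omega) hn)
    have hpP : ((Ideal.absNorm P : ℕ) : 𝓞 K) ∈ P := Ideal.absNorm_mem P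
    have hz : (((n' - n : ℤ)) : 𝓞 K) ∈ P ^ k := by
      have : (((n' - n : ℤ)) : 𝓞 K) = ((n' : 𝓞 K) - rO) - ((n : 𝓞 K) - rO) := by push_cast; ring
      rw [this]; exact Ideal.sub_mem _ hn' hn
    have := Int.le_of_dvd (by omega) (int_dvd_of hP h0 hpr hpP hE2 k _ hz)
    exact_mod_cast this
  · intro L
    have := geom_bd2 (1/(Ideal.absNorm P : ℝ)) (by positivity) (one_div_le_one_div_of_le (by norm_num) h2') L
    simpa only [one_div_pow] using this

lemma W_exc (rO : 𝓞 K) {P : Ideal (𝓞 K)} (hP : P.IsPrime) (h0 : P ≠ ⊥) : ∃ C : ℝ, 0 ≤ C ∧ ∀ (Y : ℝ) (hY : 1 ≤ Y)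
    (hn : ∀ n ∈ JJ Y, 
    Ideal.span {(n : 𝓞 K) - rO} ≠ ⊥ ∧ 
    (Ideal.absNorm (Ideal.span {(n : 𝓞 K) - rO}) : ℝ) ≤ (3 * Y) ^ Module.finrank ℤ (𝓞 K)),
    Real.log (Ideal.absNorm P) * WW rO P Y ≤ C * Y := by
  set d := Module.finrank ℤ (𝓞 K) with hd
  have hdpos : 0 < d := finrank_pos'
  have hdR : (0:ℝ) < d := by exact_mod_cast hdpos
  set c : ℝ := (2:ℝ)^((1:ℝ)/d) with hc
  have hc1 : 1 < c := Real.one_lt_rpow (by norm_num) (by positivity)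
  have hcd : c ^ d = 2 := by
    rw [hc, ← Real.rpow_natCast, ← Real.rpow_mul (by norm_num), one_div, inv_mul_cancel₀ hdR.ne', Real.rpow_one]
  have h2 := two_le_absNorm hP h0
  have h2' : (2:ℝ) ≤ Ideal.absNorm P := by exact_mod_cast h2
  have hlog : 0 < Real.log (Ideal.absNorm P) := Real.log_pos (by linarith)
  set G : ℝ := (1/c)/(1-1/c) with hG
  have hq : 1/c < 1 := by rw [div_lt_one (by linarith)]; exact hc1
  have hq0 : 0 < 1/c := by positivity
  have hG0 : 0 ≤ G := div_nonneg hq0.le (by linarith)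
  refine ⟨Real.log (Ideal.absNorm P) * G + 3 * d, by positivity, fun Y hY hn => ?_⟩
  have := W_upper rO hP h0 Y hY hn (fun k => c^k) (fun k => by positivity) ?_ G ?_
  · have h3 : Real.log (3*Y) ≤ 3*Y := (Real.log_le_sub_one_of_pos (by linarith)).trans (by linarith)
    have h4 := mul_le_mul_of_nonneg_left h3 hdR.le
    refine this.trans ?_
    linarith
  · intro k hk n n' hlt hn hn'
    have hz : (((n' - n : ℤ)) : 𝓞 K) ∈ P ^ k := by
      have : (((n' - n : ℤ)) : 𝓞 K) = ((n' : 𝓞 K) - rO) - ((n : 𝓞 K) - rO) := by push_cast; ring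
      rw [this]; exact Ideal.sub_mem _ hn' hn
    obtain ⟨m, hm⟩ : ∃ m : ℕ, n' - n = m := ⟨(n'-n).toNat, by omega⟩
    have hm0 : m ≠ 0 := by omega
    rw [hm] at hz
    have h5 := map_dvd Ideal.absNorm (Ideal.dvd_span_singleton.2 hz)
    rw [map_pow, Int.cast_natCast, Ideal.absNorm_span_natCast] at h5
    have h6 := Nat.le_of_dvd (by positivity) h5
    have h7 : (2:ℝ)^k ≤ (m:ℝ)^d := by
      calc (2:ℝ)^k ≤ (Ideal.absNorm P : ℝ)^k := by gcongr
        _ ≤ _ := by exact_mod_cast h6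
    have h8 : (c^k)^d ≤ (m:ℝ)^d := by
      rw [← pow_mul, mul_comm, pow_mul, hcd]; exact h7
    have h9 := le_of_pow_le_pow_left₀ hdpos.ne' (by positivity) h8
    have h10 : (n':ℝ) - n = m := by exact_mod_cast hm
    rw [h10]; exact h9
  · intro L
    have := geom_bd (1/c) hq0.le hq L
    simpa only [one_div_pow] using this

open Classical in
lemma W_lower (rO : 𝓞 K) {P : Ideal (𝓞 K)} (hP : P.IsPrime) (h0 : P ≠ ⊥) (hpr : (Ideal.absNorm P).Prime) 
    (Y : ℝ) (hY : 1 ≤ Y)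
    (hn : ∀ n ∈ JJ Y, Ideal.span {(n : 𝓞 K) - rO} ≠ ⊥) :
    Y / Ideal.absNorm P - 2 ≤ WW rO P Y := by
  obtain ⟨a, ha⟩ := exists_int_of_prime_norm hpr rfl rO
  refine (class_card Y (by linarith) _ hpr.one_le a).trans ?_
  rw [Finset.card_filter]
  push_cast
  unfold WW
  refine Finset.sum_le_sum fun n hnJ => ?_
  split_ifs with h
  · obtain ⟨w, hw⟩ := h
    have hmem : (n : 𝓞 K) - rO ∈ P := by
      have h1 : (n : 𝓞 K) = a + (Ideal.absNorm P : 𝓞 K) * w := by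
        have : n = a + (Ideal.absNorm P : ℤ) * w := by linarith
        rw [this]; push_cast; rfl
      have : (n : 𝓞 K) - rO = ((a : 𝓞 K) - rO) + (Ideal.absNorm P : 𝓞 K) * w := by rw [h1]; ring
      rw [this]
      exact P.add_mem ha (P.mul_mem_right _ (Ideal.absNorm_mem P))
    have := (pow_dvd_iff_count hP h0 (hn n hnJ) 1).1 (by rw [pow_one]; exact Ideal.dvd_span_singleton.2 hmem)
    exact_mod_cast this
  · positivity

lemma WW_nonneg (rO : 𝓞 K) (P : Ideal (𝓞 K)) (Y : ℝ) : 0 ≤ WW rO P Y := by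
  unfold WW; positivity

end


section
variable {K : Type*} [Field K] [NumberField K]

lemma sum_pair_le (s : Finset (Ideal (𝓞 K))) (k x : ℕ) (hs : ∀ P ∈ s, (P, k) ∈ QS K x) 
    (f : Ideal (𝓞 K) × ℕ → ℝ) (hf : ∀ q ∈ QS K x, 0 ≤ f q) : 
    ∑ P ∈ s, f (P, k) ≤ ∑ q ∈ QS K x, f q := by
  classical
  have h : ∑ P ∈ s, f (P, k) = ∑ q ∈ s.image (fun P => (P, k)), f q := by
    rw [Finset.sum_image]
    intro a _ b _ hab
    exact (Prod.mk.inj hab).1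
  rw [h]
  refine Finset.sum_le_sum_of_subset_of_nonneg ?_ (fun q hq _ => hf q hq)
  intro q hq
  obtain ⟨P, hP, rfl⟩ := Finset.mem_image.1 hq
  exact hs P hP

variable (K) in
lemma PS_log : ∃ C : ℝ, 0 ≤ C ∧ ∀ x : ℕ, ∑ P ∈ PS K x, Real.log (Ideal.absNorm P) ≤ C * x := by
  obtain ⟨C, hC, h⟩ := aux_psi
  refine ⟨(Module.finrank ℤ (𝓞 K) : ℝ)^2 * C, by positivity, fun x => ?_⟩
  have h1 := logsum (K := K) (fun _ => 1) (fun _ => zero_le_one) x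
  simp only [mul_one] at h1
  have h2 := sum_pair_le (PS K x) 1 x (fun P hP => by
    rw [mem_PS] at hP; rw [mem_QS]; simpa using hP) (fun q => Real.log (Ideal.absNorm q.1)) 
    (fun q _ => Real.log_natCast_nonneg _)
  refine h2.trans (h1.trans ?_)
  rw [mul_assoc]
  gcongr
  exact h x

variable (K) in
lemma PS_nonprime : ∃ C : ℝ, 0 ≤ C ∧ ∀ x : ℕ, ∑ P ∈ (PS K x).filter (fun P => ¬ (Ideal.absNorm P).Prime), 
    Real.log (Ideal.absNorm P) / Ideal.absNorm P ≤ C := by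
  obtain ⟨C, hC, h⟩ := nonprime_sum K
  refine ⟨C, hC, fun x => ?_⟩
  refine le_trans (le_trans (le_of_eq ?_) (sum_pair_le ((PS K x).filter (fun P => ¬ (Ideal.absNorm P).Prime)) 1 x (fun P hP => by
    have hP := (Finset.mem_filter.1 hP).1
    rw [mem_PS] at hP; rw [mem_QS]; simpa using hP) (fun q => Real.log (Ideal.absNorm q.1) * (if (Ideal.absNorm q.1 ^ q.2).Prime then 0 else 
      (1:ℝ)/(Ideal.absNorm q.1 ^ q.2 : ℕ))) 
    (fun q _ => ?_))) (h x)
  · refine Finset.sum_congr rfl fun P hP => ?_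
    have hP := (Finset.mem_filter.1 hP).2
    simp only [pow_one]
    rw [if_neg hP]
    ring
  · refine mul_nonneg (Real.log_natCast_nonneg _) ?_
    split_ifs <;> positivity

variable (K) in
lemma PS_sq : ∃ C : ℝ, 0 ≤ C ∧ ∀ x : ℕ, ∑ P ∈ PS K x, 
    Real.log (Ideal.absNorm P) / (Ideal.absNorm P : ℝ)^2 ≤ C := by
  obtain ⟨C, hC, h⟩ := nonprime_sum K
  refine ⟨C, hC, fun x => ?_⟩
  refine le_trans (le_trans (le_of_eq ?_) (sum_pair_le (PS K x) 2 (x^2) (fun P hP => by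
    rw [mem_PS] at hP; rw [mem_QS]
    exact ⟨hP.1, hP.2.1, by norm_num, Nat.pow_le_pow_left hP.2.2 2⟩) (fun q => Real.log (Ideal.absNorm q.1) * (if (Ideal.absNorm q.1 ^ q.2).Prime then 0 else 
      (1:ℝ)/(Ideal.absNorm q.1 ^ q.2 : ℕ))) 
    (fun q _ => ?_))) (h (x^2))
  · refine Finset.sum_congr rfl fun P hP => ?_
    rw [if_neg (Nat.Prime.not_prime_pow (by norm_num))]
    push_cast
    ring
  · refine mul_nonneg (Real.log_natCast_nonneg _) ?_
    split_ifs <;> positivity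

variable (K) in
lemma PS_card (x : ℕ) : (PS K x).card ≤ Module.finrank ℤ (𝓞 K) * Nat.primeCounting x := by
  classical
  have hc : Nat.primeCounting x = ((Finset.range (x+1)).filter Nat.Prime).card := by
    rw [Nat.primeCounting, Nat.primeCounting', Nat.count_eq_card_filter_range]
  rw [hc]
  have hmf : ∀ P ∈ PS K x, (Ideal.absNorm P).minFac.Prime ∧ (((Ideal.absNorm P).minFac : ℕ) : 𝓞 K) ∈ P := by
    intro P hP
    rw [mem_PS] at hP
    obtain ⟨p, n, hp, hpP, hN, hn, -⟩ := exists_p hP.1 hP.2.1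
    rw [hN, Nat.Prime.pow_minFac hp (by omega)]
    exact ⟨hp, hpP⟩
  refine Finset.card_le_mul_card_image_of_maps_to (f := fun P => (Ideal.absNorm P).minFac) ?_ _ ?_
  · intro P hP
    have h1 := hmf P hP
    rw [mem_PS] at hP
    rw [Finset.mem_filter, Finset.mem_range]
    refine ⟨?_, h1.1⟩
    have := two_le_absNorm hP.1 hP.2.1
    have := Nat.minFac_le (n := Ideal.absNorm P) (by omega)
    omega
  · intro p hp
    refine card_primes_over p (Finset.mem_filter.1 hp).2 _ ?_
    intro P hP
    rw [Finset.mem_filter] at hP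
    have h1 := hmf P hP.1
    rw [hP.2] at h1
    have h2 := mem_PS.1 hP.1
    exact ⟨h2.1, h2.2.1, h1.2⟩

lemma L1_sum (rO : 𝓞 K) (Y : ℝ)
    (L1 : ℤ → ℝ → ℝ) (hL1 : ∀ n, L1 n Y = ∑ P ∈ PS K ⌊3*Y⌋₊, 
      (open Classical in (Multiset.count P (UniqueFactorizationMonoid.normalizedFactors
            (Ideal.span {(n : 𝓞 K) - rO})) : ℝ)) * Real.log (Ideal.absNorm P)) :
    (∑ᶠ n : ℤ, if Y < (n : ℝ) ∧ (n : ℝ) < 2 * Y then L1 n Y else 0) = 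
      ∑ P ∈ PS K ⌊3*Y⌋₊, Real.log (Ideal.absNorm P) * WW rO P Y := by
  classical
  rw [finsum_eq_sum_of_support_subset (s := JJ Y)]
  · rw [Finset.sum_congr rfl (fun n hn => by rw [if_pos (mem_JJ.1 hn), hL1 n])]
    rw [Finset.sum_comm]
    refine Finset.sum_congr rfl fun P _ => ?_
    unfold WW
    rw [Finset.mul_sum]
    refine Finset.sum_congr rfl fun n _ => ?_
    rw [mul_comm]
  · intro n hn
    rw [Function.mem_support] at hn
    by_contra h
    apply hn
    rw [if_neg]
    intro h'
    exact h (mem_JJ.2 h')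

lemma main_bound (r : K) (hgen : Algebra.adjoin ℚ {r} = ⊤)
    (rO : 𝓞 K) (hrO : algebraMap (𝓞 K) K rO = r) : ∃ Cc : ℝ, ∀ᶠ Y : ℝ in Filter.atTop,
    |∑ P ∈ PS K ⌊3*Y⌋₊, Real.log (Ideal.absNorm P) * WW rO P Y - Y * Real.log Y| ≤ Cc * Y := by
  classical
  obtain ⟨E, hE⟩ := exceptional r hgen rO hrO
  obtain ⟨B, hB1, hB⟩ := norm_ok rO
  obtain ⟨C1, hC1, h1⟩ := PS_log K
  obtain ⟨C2, hC2, h2⟩ := PS_nonprime K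
  obtain ⟨C3, hC3, h3⟩ := PS_sq K
  obtain ⟨C4, hC4, h4⟩ := aux_pi
  obtain ⟨C5, hC5, h5⟩ := mertens K
  have hEx : ∀ P : Ideal (𝓞 K), ∃ C : ℝ, 0 ≤ C ∧ (P.IsPrime → P ≠ ⊥ → ∀ (Y : ℝ) (_ : 1 ≤ Y)
    (_ : ∀ n ∈ JJ Y, Ideal.span {(n : 𝓞 K) - rO} ≠ ⊥ ∧ 
    (Ideal.absNorm (Ideal.span {(n : 𝓞 K) - rO}) : ℝ) ≤ (3 * Y) ^ Module.finrank ℤ (𝓞 K)),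
    Real.log (Ideal.absNorm P) * WW rO P Y ≤ C * Y) := by
    intro P
    by_cases hP : P.IsPrime ∧ P ≠ ⊥
    · obtain ⟨C, hC, h⟩ := W_exc rO hP.1 hP.2
      exact ⟨C, hC, fun _ _ => h⟩
    · exact ⟨0, le_rfl, fun a b => absurd ⟨a, b⟩ hP⟩
  choose c hc0 hc using hEx
  set d : ℝ := (Module.finrank ℤ (𝓞 K) : ℝ) with hd
  have hd0 : 0 ≤ d := by positivity
  set C6 : ℝ := ∑ P ∈ E, c P with hC6
  have hC60 : 0 ≤ C6 := Finset.sum_nonneg fun P _ => hc0 P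
  have hlog3 : 0 < Real.log 3 := Real.log_pos (by norm_num)
  refine ⟨(Real.log 3 + C5 + 2 * C3 + d * (d * (C4 * 3)) + C6) + (C5 + C2 + 6 * C1), ?_⟩
  filter_upwards [Filter.eventually_ge_atTop B] with Y hY
  have hY1 : 1 ≤ Y := hB1.trans hY
  have hn := hB Y hY
  set x := ⌊3*Y⌋₊ with hx
  have hxle : (x:ℝ) ≤ 3 * Y := Nat.floor_le (by linarith)
  have hxge : 3 * Y < x + 1 := Nat.lt_floor_add_one _
  have hxY : Y ≤ x := by linarith
  have hx1 : 1 ≤ x := by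
    have : (1:ℝ) ≤ x := by linarith
    exact_mod_cast this
  have hxR : (1:ℝ) ≤ x := by exact_mod_cast hx1
  have hM := abs_le.1 (h5 x hx1)
  have hlx : Real.log x ≤ Real.log 3 + Real.log Y := by
    rw [← Real.log_mul (by norm_num) (by linarith)]
    exact Real.log_le_log (by linarith) hxle
  have hlx2 : Real.log Y ≤ Real.log x := Real.log_le_log (by linarith) hxY
  have hl3 : 0 ≤ Real.log (3*Y) := Real.log_nonneg (by linarith)
  have hlogn : ∀ P : Ideal (𝓞 K), 0 ≤ Real.log (Ideal.absNorm P) := fun P => Real.log_natCast_nonneg _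
  rw [abs_le]
  constructor
  · -- lower bound
    have hlow : Y * Mer K x - Y * C2 - 2 * (C1 * x) ≤ ∑ P ∈ PS K x, Real.log (Ideal.absNorm P) * WW rO P Y := by
      have e1 : ∀ P ∈ PS K x, Y * (Real.log (Ideal.absNorm P) / Ideal.absNorm P) - 
          Y * (if (Ideal.absNorm P).Prime then 0 else Real.log (Ideal.absNorm P) / Ideal.absNorm P) 
          - 2 * Real.log (Ideal.absNorm P) ≤ Real.log (Ideal.absNorm P) * WW rO P Y := by
        intro P hP
        rw [mem_PS] at hP
        split_ifs with hpr
        · have := mul_le_mul_of_nonneg_left (W_lower rO hP.1 hP.2.1 hpr Y hY1 fun n h => (hn n h).1) (hlogn P)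
          refine le_trans (le_of_eq ?_) this
          ring
        · have := mul_nonneg (hlogn P) (WW_nonneg rO P Y)
          have := hlogn P
          linarith
      have e2 := Finset.sum_le_sum e1
      rw [Finset.sum_sub_distrib, Finset.sum_sub_distrib, ← Finset.mul_sum, ← Finset.mul_sum, ← Finset.mul_sum] at e2
      have e3 : ∑ P ∈ PS K x, (if (Ideal.absNorm P).Prime then 0 else Real.log (Ideal.absNorm P) / Ideal.absNorm P) ≤ C2 := by
        refine le_trans (le_of_eq ?_) (h2 x)
        rw [Finset.sum_filter]
        refine Finset.sum_congr rfl fun P _ => ?_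
        split_ifs <;> rfl
      have e4 := h1 x
      have e5 := mul_le_mul_of_nonneg_left e3 (by linarith : 0 ≤ Y)
      unfold Mer
      linarith
    have a1 : Y * (Real.log Y - C5) ≤ Y * Mer K x := by
      refine mul_le_mul_of_nonneg_left ?_ (by linarith)
      linarith [hM.1]
    have a2 : C1 * x ≤ C1 * (3 * Y) := by gcongr
    have a3 : 0 ≤ (Real.log 3 + C5 + 2 * C3 + d * (d * (C4 * 3)) + C6) * Y := by positivity
    linarith
  · have hup : ∑ P ∈ PS K x, Real.log (Ideal.absNorm P) * WW rO P Y ≤ 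
        Y * Mer K x + 2 * Y * C3 + d * (d * (C4 * (3 * Y))) + C6 * Y := by
      have e1 : ∀ P ∈ PS K x, Real.log (Ideal.absNorm P) * WW rO P Y ≤ 
        Y * (Real.log (Ideal.absNorm P) / Ideal.absNorm P) + 
        2 * Y * (Real.log (Ideal.absNorm P) / (Ideal.absNorm P : ℝ)^2) + d * Real.log (3 * Y)
          + (if P ∈ E then c P else 0) * Y := by
        intro P hP
        rw [mem_PS] at hP
        have n1 := hlogn P
        split_ifs with hPE
        · have := hc P hP.1 hP.2.1 Y hY1 hn
          have : 0 ≤ Y * (Real.log (Ideal.absNorm P) / Ideal.absNorm P) + 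
            2 * Y * (Real.log (Ideal.absNorm P) / (Ideal.absNorm P : ℝ)^2) + d * Real.log (3 * Y) := by positivity
          linarith
        · have h := hE P hP.1 hP.2.1 hPE
          have := W_generic rO hP.1 hP.2.1 Y hY1 hn h.1 h.2
          linarith
      have e2 := Finset.sum_le_sum e1
      rw [Finset.sum_add_distrib, Finset.sum_add_distrib, Finset.sum_add_distrib, ← Finset.mul_sum, ← Finset.mul_sum, ← Finset.sum_mul (s := PS K x) (f := fun P => if P ∈ E then c P else 0), Finset.sum_const, nsmul_eq_mul] at e2
      have e3 : ∑ P ∈ PS K x, (if P ∈ E then c P else 0) ≤ C6 := by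
        rw [← Finset.sum_filter]
        refine Finset.sum_le_sum_of_subset_of_nonneg ?_ fun P _ _ => hc0 P
        intro P hP; exact (Finset.mem_filter.1 hP).2
      have e4 := mul_le_mul_of_nonneg_right e3 (by linarith : 0 ≤ Y)
      have e5 := mul_le_mul_of_nonneg_left (h3 x) (by linarith : 0 ≤ 2 * Y)
      have e6 : ((PS K x).card : ℝ) ≤ d * Nat.primeCounting x := by rw [hd]; exact_mod_cast PS_card K x
      have e7 := h4 (3*Y) (by linarith)
      have e8 : ((PS K x).card : ℝ) * (d * Real.log (3*Y)) ≤ d * (d * (C4 * (3 * Y))) := by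
        calc _ ≤ (d * Nat.primeCounting x) * (d * Real.log (3*Y)) := by gcongr
          _ = d * (d * (Nat.primeCounting x * Real.log (3*Y))) := by ring
          _ ≤ _ := by gcongr
      unfold Mer
      linarith
    have a1 : Y * Mer K x ≤ Y * (Real.log 3 + Real.log Y + C5) := by
      refine mul_le_mul_of_nonneg_left ?_ (by linarith)
      linarith [hM.2]
    have a3 : 0 ≤ (C5 + C2 + 6 * C1) * Y := by positivity
    linarith
end

open Classical in
/-- There is a constant `C` (depending only on `f`) such that for all
sufficiently large `X`, `|∑_{X < n < 2X} L₁(n, X) − X·log X| ≤ C·X`. -/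
theorem stmt_7 (c₀ c₁ c₂ : ℤ)
    (hf : Irreducible (X ^ 3 + C c₂ * X ^ 2 + C c₁ * X + C c₀ : ℤ[X]))
    (K : Type*) [Field K] [NumberField K] (r : K)
    (hr : aeval r (X ^ 3 + C c₂ * X ^ 2 + C c₁ * X + C c₀ : ℤ[X]) = 0)
    (hgen : Algebra.adjoin ℚ {r} = ⊤)
    (rO : 𝓞 K) (hrO : algebraMap (𝓞 K) K rO = r) :
    ∃ Cc : ℝ, ∀ᶠ Y : ℝ in Filter.atTop,
      |(∑ᶠ n : ℤ, if Y < (n : ℝ) ∧ (n : ℝ) < 2 * Y then L1 rO n Y else 0) -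
          Y * Real.log Y| ≤ Cc * Y := by
  obtain ⟨Cc, hC⟩ := main_bound r hgen rO hrO
  refine ⟨Cc, ?_⟩
  filter_upwards [hC, Filter.eventually_ge_atTop 1] with Y hY hY1
  rw [L1_sum rO Y (fun n y => L1 rO n y) ?_]
  · exact hY
  intro n
  show L1 rO n Y = _
  unfold L1
  rw [finsum_eq_sum_of_support_subset (s := PS K ⌊3*Y⌋₊)]
  · refine Finset.sum_congr rfl fun P hP => ?_
    rw [mem_PS] at hP
    have h1 : (Ideal.absNorm P : ℝ) ≤ 3 * Y := 
      le_trans (by exact_mod_cast hP.2.2) (Nat.floor_le (by linarith))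
    have h2 : Nat.card (𝓞 K ⧸ P) = Ideal.absNorm P := rfl
    rw [h2, if_pos ⟨hP.1, h1⟩]
  · intro P hP
    rw [Function.mem_support] at hP
    have h2 : Nat.card (𝓞 K ⧸ P) = Ideal.absNorm P := rfl
    rw [h2] at hP
    rw [Finset.mem_coe, mem_PS]
    by_cases h : P.IsPrime ∧ (Ideal.absNorm P : ℝ) ≤ 3 * Y
    · refine ⟨h.1, ?_, Nat.le_floor h.2⟩
      intro hb
      apply hP
      rw [if_pos h]
      have : Ideal.absNorm P = 0 := by rw [hb]; simp
      rw [this]; simp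
    · exact absurd (if_neg h) hP
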